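/- arXiv:1711.00892 — 2 statements merged into one kernel-verified Lean document; each statement's English description precedes it below -/
import Mathlib

section
/- For every real β with 0 ≤ β ≤ β* and every real α with 0 ≤ α < λ₁(Ω), the supremum S_{α,β} = sup{ ∫_Ω e^{βu²} dx : u ∈ C_c^∞(Ω), ‖u‖²_α ≤ 1 } is finite. -/
open MeasureTheory Real Filter Topology
open scoped ENNReal

noncomputable section

/-- The Laplacian of `u : ℝ^n → ℝ` at `x`, as the sum of second partial derivatives. -/
def lap {n : ℕ} (u : EuclideanSpace ℝ (Fin n) → ℝ) (x : EuclideanSpace ℝ (Fin n)) : ℝ :=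
  ∑ i : Fin n, fderiv ℝ (fun y => fderiv ℝ u y (EuclideanSpace.single i 1)) x
    (EuclideanSpace.single i 1)

/-- The `l`-fold iterated Laplacian `Δ^l u`. -/
def iterLap {n : ℕ} (l : ℕ) (u : EuclideanSpace ℝ (Fin n) → ℝ) :
    EuclideanSpace ℝ (Fin n) → ℝ := lap^[l] u

/-- `|Δ^{m/2} u|²`, where `Δ^{m/2}u = Δⁿu` if `m = 2n` and `Δ^{m/2}u = ∇Δⁿu` if `m = 2n+1`. -/
def halfLapSq (m : ℕ) (u : EuclideanSpace ℝ (Fin (2*m)) → ℝ)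
    (x : EuclideanSpace ℝ (Fin (2*m))) : ℝ :=
  if m % 2 = 0 then (iterLap (m/2) u x)^2 else ‖gradient (iterLap (m/2) u) x‖^2

/-- The Adams critical exponent `β* = 2^{2m} π^m m!`. -/
def betaStar (m : ℕ) : ℝ := 2^(2*m) * Real.pi^m * (Nat.factorial m : ℝ)

/-- `u ∈ C_c^∞(Ω)`: smooth with compact support contained in `Ω`. -/
def IsTestFun (m : ℕ) (Ω : Set (EuclideanSpace ℝ (Fin (2*m))))
    (u : EuclideanSpace ℝ (Fin (2*m)) → ℝ) : Prop :=
  ContDiff ℝ (⊤ : ℕ∞) u ∧ HasCompactSupport u ∧ tsupport u ⊆ Ω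

/-- `‖u‖²_{H^m_0(Ω)} = ∫_Ω |Δ^{m/2}u|²`. -/
def sobNormSq (m : ℕ) (Ω : Set (EuclideanSpace ℝ (Fin (2*m))))
    (u : EuclideanSpace ℝ (Fin (2*m)) → ℝ) : ℝ :=
  ∫ x in Ω, halfLapSq m u x

/-- `‖u‖²_{L²(Ω)}`. -/
def l2NormSq (m : ℕ) (Ω : Set (EuclideanSpace ℝ (Fin (2*m))))
    (u : EuclideanSpace ℝ (Fin (2*m)) → ℝ) : ℝ :=
  ∫ x in Ω, (u x)^2

/-- The first eigenvalue `λ₁(Ω)`. -/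
def lambda1 (m : ℕ) (Ω : Set (EuclideanSpace ℝ (Fin (2*m)))) : ℝ :=
  sInf {r : ℝ | ∃ u, IsTestFun m Ω u ∧ u ≠ 0 ∧ r = sobNormSq m Ω u / l2NormSq m Ω u}

/-- The Moser–Trudinger integral `∫_Ω e^{βu²} dx`, valued in `[0,∞]`. -/
def MTint (m : ℕ) (Ω : Set (EuclideanSpace ℝ (Fin (2*m)))) (β : ℝ)
    (u : EuclideanSpace ℝ (Fin (2*m)) → ℝ) : ℝ≥0∞ :=
  ∫⁻ x in Ω, ENNReal.ofReal (Real.exp (β * (u x)^2))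

/-- `S_{α,β} = sup { ∫_Ω e^{βu²} : u ∈ C_c^∞(Ω), ‖u‖²_α ≤ 1 } ∈ [0,∞]`. -/
def Ssup (m : ℕ) (Ω : Set (EuclideanSpace ℝ (Fin (2*m)))) (α β : ℝ) : ℝ≥0∞ :=
  ⨆ (u : EuclideanSpace ℝ (Fin (2*m)) → ℝ)
    (_ : IsTestFun m Ω u ∧ sobNormSq m Ω u - α * l2NormSq m Ω u ≤ 1), MTint m Ω β u

/-- `Ω` has smooth boundary: it is the sublevel set of a smooth function with
nonvanishing differential on the boundary. -/
def HasSmoothBoundary (m : ℕ) (Ω : Set (EuclideanSpace ℝ (Fin (2*m)))) : Prop :=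
  ∃ f : EuclideanSpace ℝ (Fin (2*m)) → ℝ, ContDiff ℝ (⊤ : ℕ∞) f ∧
    Ω = f ⁻¹' (Set.Iio 0) ∧ ∀ x ∈ frontier Ω, fderiv ℝ f x ≠ 0


open scoped FourierTransform

/-- Euclidean space of dimension `n`. -/
abbrev VV (n : ℕ) := EuclideanSpace ℝ (Fin n)

/-- Fourier transform of a real function. -/
def FT {n : ℕ} (g : VV n → ℝ) : VV n → ℂ := 𝓕 (fun x => ((g x : ℝ) : ℂ))

/-- The symbol of `-Δ`. -/
def zz {n : ℕ} (ξ : VV n) : ℝ := (2 * π * ‖ξ‖) ^ 2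

lemma zz_nonneg {n : ℕ} (ξ : VV n) : 0 ≤ zz ξ := sq_nonneg _

lemma zz_continuous {n : ℕ} : Continuous (zz : VV n → ℝ) := by
  unfold zz; fun_prop

/-- Smooth with compact support. -/
def Cc {n : ℕ} (g : VV n → ℝ) : Prop := ContDiff ℝ (⊤ : ℕ∞) g ∧ HasCompactSupport g

/-- Partial derivative. -/
def pd {n : ℕ} (i : Fin n) (g : VV n → ℝ) (x : VV n) : ℝ :=
  fderiv ℝ g x (EuclideanSpace.single i 1)

lemma Cc.pd {n : ℕ} {g : VV n → ℝ} (h : Cc g) (i : Fin n) : Cc (pd i g) := by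
  refine ⟨?_, ?_⟩
  · have := h.1.fderiv_right (m := (⊤ : ℕ∞)) (by simp)
    exact this.clm_apply contDiff_const
  · have := h.2.fderiv ℝ
    exact this.mono' (by
      intro x hx
      by_contra hc
      have h0 : fderiv ℝ g x = 0 := image_eq_zero_of_notMem_tsupport hc
      simp [_root_.pd, h0] at hx)

lemma Cc.sum {n : ℕ} {ι : Type*} (s : Finset ι) {g : ι → VV n → ℝ} (h : ∀ i, Cc (g i)) :
    Cc (fun x => ∑ i ∈ s, g i x) := by
  classical
  induction s using Finset.induction_on with
  | empty =>
    simp only [Finset.sum_empty]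
    exact ⟨contDiff_const, HasCompactSupport.zero⟩
  | insert a s ha ih =>
    simp only [Finset.sum_insert ha]
    exact ⟨(h a).1.add ih.1, (h a).2.add ih.2⟩

/-- Associated complex Schwartz function. -/
def Cc.S {n : ℕ} {g : VV n → ℝ} (h : Cc g) : SchwartzMap (VV n) ℂ :=
  HasCompactSupport.toSchwartzMap (f := fun x => ((g x : ℝ) : ℂ))
    (h.2.comp_left (g := fun r : ℝ => (r : ℂ)) (by simp))
    (Complex.ofRealCLM.contDiff.comp h.1)

lemma Cc.S_apply {n : ℕ} {g : VV n → ℝ} (h : Cc g) (x : VV n) : h.S x = (g x : ℂ) := rfl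

lemma Cc.S_coe {n : ℕ} {g : VV n → ℝ} (h : Cc g) :
    (h.S : VV n → ℂ) = fun x => ((g x : ℝ) : ℂ) := rfl

lemma Cc.FT_eq {n : ℕ} {g : VV n → ℝ} (h : Cc g) : FT g = (𝓕 h.S : SchwartzMap (VV n) ℂ) := by
  rw [SchwartzMap.fourier_coe, h.S_coe]; rfl

lemma Cc.integrable {n : ℕ} {g : VV n → ℝ} (h : Cc g) : Integrable g :=
  h.1.continuous.integrable_of_hasCompactSupport h.2

lemma Cc.integrable_sq {n : ℕ} {g : VV n → ℝ} (h : Cc g) : Integrable (fun x => (g x)^2) := by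
  refine Continuous.integrable_of_hasCompactSupport (h.1.continuous.pow 2) ?_
  exact h.2.comp_left (g := fun r : ℝ => r^2) (by simp)

lemma Cc.plancherel {n : ℕ} {g : VV n → ℝ} (h : Cc g) :
    ∫ ξ, ‖FT g ξ‖ ^ 2 = ∫ x, (g x) ^ 2 := by
  rw [h.FT_eq, SchwartzMap.integral_norm_sq_fourier]
  simp [h.S_apply]

lemma inner_single_one {n : ℕ} (i : Fin n) (ξ : VV n) :
    inner ℝ ξ (EuclideanSpace.single i (1 : ℝ)) = ξ i := by
  have := EuclideanSpace.inner_single_right (𝕜 := ℝ) i (1:ℝ) ξ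
  rw [this]; simp

lemma Cc.FT_pd {n : ℕ} {g : VV n → ℝ} (h : Cc g) (i : Fin n) (ξ : VV n) :
    FT (_root_.pd i g) ξ = (2 * π * Complex.I * (ξ i : ℝ)) * FT g ξ := by
  have key := SchwartzMap.fourier_lineDerivOp_eq h.S (EuclideanSpace.single i (1 : ℝ))
  have e1 : (h.pd i).S = LineDeriv.lineDerivOp (EuclideanSpace.single i (1 : ℝ)) h.S := by
    ext x
    rw [Cc.S_apply, SchwartzMap.lineDerivOp_apply_eq_fderiv, h.S_coe]
    have hd : HasFDerivAt g (fderiv ℝ g x) x :=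
      (h.1.differentiable (by simp)).differentiableAt.hasFDerivAt
    have := (Complex.ofRealCLM.hasFDerivAt (x := g x)).comp x hd
    have h2 : HasFDerivAt (fun x => ((g x : ℝ) : ℂ)) (Complex.ofRealCLM.comp (fderiv ℝ g x)) x := this
    rw [h2.fderiv]
    simp [_root_.pd]
  rw [(h.pd i).FT_eq, e1, key, h.FT_eq]
  have : (inner ℝ · (EuclideanSpace.single i (1 : ℝ)) : VV n → ℝ).HasTemperateGrowth :=
    ((innerSL ℝ).flip _).hasTemperateGrowth
  simp [this]
  rw [inner_single_one]
  ring

lemma FT_sum {n : ℕ} {ι : Type*} (s : Finset ι) {g : ι → VV n → ℝ} (h : ∀ i, Integrable (g i))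
    (ξ : VV n) : FT (fun x => ∑ i ∈ s, g i x) ξ = ∑ i ∈ s, FT (g i) ξ := by
  simp only [FT, Real.fourier_eq]
  rw [← integral_finsetSum]
  · congr 1; ext x; simp [Finset.smul_sum]
  · intro i _
    have := (Real.fourierIntegral_convergent_iff (f := fun x => ((g i x : ℝ) : ℂ)) ξ).2
      (h i).ofReal
    exact this

lemma lap_eq {n : ℕ} (u : VV n → ℝ) : lap u = fun x => ∑ i : Fin n, pd i (pd i u) x := rfl

lemma Cc.lap {n : ℕ} {g : VV n → ℝ} (h : Cc g) : Cc (lap g) := by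
  rw [lap_eq]; exact Cc.sum _ fun i => (h.pd i).pd i

lemma zz_sum {n : ℕ} (ξ : VV n) : zz ξ = ∑ i, (2 * π * ξ i) ^ 2 := by
  simp only [zz, mul_pow, EuclideanSpace.real_norm_sq_eq, Finset.mul_sum]

lemma Cc.FT_lap {n : ℕ} {g : VV n → ℝ} (h : Cc g) (ξ : VV n) :
    FT (_root_.lap g) ξ = -(zz ξ : ℂ) * FT g ξ := by
  rw [lap_eq, FT_sum _ (fun i => ((h.pd i).pd i).integrable), zz_sum]
  simp only [(h.pd _).FT_pd, h.FT_pd]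
  push_cast
  rw [← Finset.sum_neg_distrib, Finset.sum_mul]
  refine Finset.sum_congr rfl fun i _ => ?_
  linear_combination (4 * (π:ℂ)^2 * (ξ i : ℂ)^2 * FT g ξ) * Complex.I_sq

lemma Cc.iterLap {n : ℕ} {g : VV n → ℝ} (h : Cc g) (l : ℕ) :
    Cc (iterLap l g) ∧ ∀ ξ, FT (_root_.iterLap l g) ξ = (-(zz ξ : ℂ)) ^ l * FT g ξ := by
  induction l with
  | zero => exact ⟨h, by simp [_root_.iterLap]⟩
  | succ l ih =>
    have e : _root_.iterLap (l+1) g = _root_.lap (_root_.iterLap l g) := by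
      simp only [_root_.iterLap, Function.iterate_succ_apply']
    rw [e]
    refine ⟨ih.1.lap, fun ξ => ?_⟩
    rw [ih.1.FT_lap, ih.2]; ring

lemma Cc.integrable_zz {n : ℕ} {g : VV n → ℝ} (h : Cc g) (k : ℕ) :
    Integrable (fun ξ => zz ξ ^ k * ‖FT g ξ‖ ^ 2) := by
  have h1 := (𝓕 h.S).integrable_pow_mul volume (2*k)
  have hb := (𝓕 h.S).norm_le_seminorm ℝ
  rw [h.FT_eq]
  have := (h1.mul_const ((SchwartzMap.seminorm ℝ 0 0) (𝓕 h.S))).const_mul ((2*π)^(2*k))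
  refine this.mono' ?_ ?_
  · refine Continuous.aestronglyMeasurable ?_
    have := (𝓕 h.S).continuous
    have := zz_continuous (n := n)
    fun_prop
  · refine Filter.Eventually.of_forall fun ξ => ?_
    have := zz_nonneg ξ
    rw [Real.norm_of_nonneg (by positivity)]
    have e : zz ξ ^ k = (2*π)^(2*k) * ‖ξ‖^(2*k) := by
      rw [zz, ← pow_mul, mul_pow]
    rw [e, sq, mul_assoc, mul_assoc]
    gcongr
    exact hb ξ

lemma halfLap_plancherel (m : ℕ) {u : VV (2*m) → ℝ} (h : Cc u) :
    ∫ x, halfLapSq m u x = ∫ ξ, zz ξ ^ m * ‖FT u ξ‖ ^ 2 := by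
  have hi := h.iterLap (m/2)
  by_cases hm : m % 2 = 0
  · simp only [halfLapSq, hm, if_true]
    rw [← hi.1.plancherel]
    congr 1; ext ξ
    rw [hi.2, norm_mul, mul_pow, norm_pow, norm_neg, Complex.norm_real, Real.norm_of_nonneg (zz_nonneg ξ),
      ← pow_mul]
    congr 2; omega
  · simp only [halfLapSq, hm, if_false]
    have e : ∀ x, ‖gradient (iterLap (m/2) u) x‖^2 = ∑ i, (pd i (iterLap (m/2) u) x)^2 := by
      intro x
      rw [EuclideanSpace.real_norm_sq_eq]
      refine Finset.sum_congr rfl fun i _ => ?_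
      congr 1
      rw [pd, gradient]
      have := InnerProductSpace.toDual_symm_apply (𝕜 := ℝ) (x := EuclideanSpace.single i (1:ℝ)) (y := fderiv ℝ (iterLap (m/2) u) x)
      rw [← this, inner_single_one]
    simp only [e]
    have int1 : ∀ i, Integrable (fun x => (pd i (iterLap (m/2) u) x)^2) := by
      intro i
      exact (hi.1.pd i).integrable_sq
    have int2 : ∀ i, Integrable (fun ξ => ‖FT (pd i (iterLap (m/2) u)) ξ‖^2) := by
      intro i
      simpa using (hi.1.pd i).integrable_zz 0
    rw [integral_finsetSum _ (fun i _ => int1 i)]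
    have e2 : ∑ i, ∫ x, (pd i (iterLap (m/2) u) x)^2
        = ∑ i, ∫ ξ, ‖FT (pd i (iterLap (m/2) u)) ξ‖^2 :=
      Finset.sum_congr rfl fun i _ => ((hi.1.pd i).plancherel).symm
    rw [e2, ← integral_finsetSum _ (fun i _ => int2 i)]
    congr 1; ext ξ
    simp only [hi.1.FT_pd, hi.2]
    simp only [norm_mul, mul_pow, norm_pow, norm_neg, Complex.norm_real, Real.norm_of_nonneg (zz_nonneg ξ)]
    have : zz ξ ^ m = zz ξ * (zz ξ ^ (m/2))^2 := by
      rw [← pow_mul, ← pow_succ']; congr 1; omega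
    rw [this]
    nth_rewrite 2 [zz_sum]
    rw [Finset.sum_mul, Finset.sum_mul]
    refine Finset.sum_congr rfl fun i _ => ?_
    simp
    ring

lemma IsTestFun.cc {m : ℕ} {Ω : Set (VV (2*m))} {u : VV (2*m) → ℝ} (h : IsTestFun m Ω u) : Cc u :=
  ⟨h.1, h.2.1⟩

lemma IsTestFun.zero_off {m : ℕ} {Ω : Set (VV (2*m))} {u : VV (2*m) → ℝ} (h : IsTestFun m Ω u)
    {x : VV (2*m)} (hx : x ∉ Ω) : u x = 0 :=
  image_eq_zero_of_notMem_tsupport fun hc => hx (h.2.2 hc)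

lemma l2_eq {m : ℕ} {Ω : Set (VV (2*m))} {u : VV (2*m) → ℝ} (h : IsTestFun m Ω u) :
    l2NormSq m Ω u = ∫ ξ, ‖FT u ξ‖ ^ 2 := by
  rw [h.cc.plancherel, l2NormSq]
  apply setIntegral_eq_integral_of_forall_compl_eq_zero
  intro x hx
  simp [h.zero_off hx]

lemma pd_tsupport {n : ℕ} (g : VV n → ℝ) (i : Fin n) : tsupport (pd i g) ⊆ tsupport g := by
  refine (closure_minimal ?_ isClosed_closure)
  intro x hx
  by_contra hc
  have : fderiv ℝ g x = 0 := by
    by_contra h0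
    exact hc (support_fderiv_subset ℝ h0)
  simp [pd, this] at hx

lemma lap_tsupport {n : ℕ} (g : VV n → ℝ) : tsupport (lap g) ⊆ tsupport g := by
  refine (closure_minimal ?_ isClosed_closure)
  intro x hx
  by_contra hc
  apply hx
  rw [lap_eq]
  refine Finset.sum_eq_zero fun i _ => ?_
  exact image_eq_zero_of_notMem_tsupport fun h => hc (pd_tsupport g i (pd_tsupport _ i h))

lemma iterLap_tsupport {n : ℕ} (g : VV n → ℝ) (l : ℕ) : tsupport (iterLap l g) ⊆ tsupport g := by
  induction l with
  | zero => exact subset_rfl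
  | succ l ih =>
    have e : iterLap (l+1) g = lap (iterLap l g) := by
      simp only [iterLap, Function.iterate_succ_apply']
    rw [e]; exact (lap_tsupport _).trans ih

lemma sob_eq {m : ℕ} {Ω : Set (VV (2*m))} {u : VV (2*m) → ℝ} (h : IsTestFun m Ω u) :
    sobNormSq m Ω u = ∫ ξ, zz ξ ^ m * ‖FT u ξ‖ ^ 2 := by
  rw [← halfLap_plancherel m h.cc, sobNormSq]
  apply setIntegral_eq_integral_of_forall_compl_eq_zero
  intro x hx
  have hx' : x ∉ tsupport (iterLap (m/2) u) := fun hc => hx (h.2.2 (iterLap_tsupport u _ hc))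
  unfold halfLapSq
  split_ifs
  · rw [image_eq_zero_of_notMem_tsupport hx']; simp
  · have : fderiv ℝ (iterLap (m/2) u) x = 0 := by
      by_contra h0
      exact hx' (support_fderiv_subset ℝ h0)
    simp [gradient, this]

lemma parseval {n : ℕ} {f : VV n → ℝ} (hf : Integrable f) {G : VV n → ℂ} (hG : Integrable G) :
    ∫ ξ, (starRingEnd ℂ) (FT f ξ) * G ξ = ∫ x, (f x : ℂ) * 𝓕⁻ G x := by
  have := VectorFourier.integral_sesq_fourierIntegral_eq_neg_flip (μ := volume) (ν := volume)
    (f := fun x : VV n => ((f x : ℝ) : ℂ)) (g := G) (L := innerₗ (VV n)) (innerSL ℂ)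
    Real.continuous_fourierChar continuous_inner hf.ofReal hG
  simp only [innerSL_apply_apply, RCLike.inner_apply, flip_innerₗ, Complex.conj_ofReal] at this
  rw [show (fun ξ => (starRingEnd ℂ) (FT f ξ) * G ξ) = fun ξ => G ξ * (starRingEnd ℂ) (FT f ξ) from
    funext fun ξ => mul_comm _ _]
  refine this.trans ?_
  congr 1; ext x; rw [mul_comm]; rfl

lemma selfadj {n : ℕ} {f : VV n → ℝ} (hf : Integrable f) {G : VV n → ℂ} (hG : Integrable G) :
    ∫ ξ, FT f ξ * G ξ = ∫ x, (f x : ℂ) * 𝓕 G x := by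
  have := VectorFourier.integral_fourierIntegral_smul_eq_flip (μ := volume) (ν := volume)
    (f := fun x : VV n => ((f x : ℝ) : ℂ)) (g := G) (L := innerₗ (VV n))
    Real.continuous_fourierChar continuous_inner hf.ofReal hG
  simp only [smul_eq_mul, flip_innerₗ] at this
  exact this

/-- The heat kernel in dimension `2m`. -/
def hk (m : ℕ) (r : ℝ) (x : VV (2*m)) : ℝ := ((4*π*r)^m)⁻¹ * Real.exp (-‖x‖^2/(4*r))

lemma hk_nonneg (m : ℕ) {r : ℝ} (hr : 0 < r) (x : VV (2*m)) : 0 ≤ hk m r x := by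
  unfold hk; positivity

lemma hk_le (m : ℕ) {r : ℝ} (hr : 0 < r) (x : VV (2*m)) : hk m r x ≤ ((4*π*r)^m)⁻¹ := by
  unfold hk
  have : Real.exp (-‖x‖^2/(4*r)) ≤ 1 := by
    rw [Real.exp_le_one_iff]
    apply div_nonpos_of_nonpos_of_nonneg <;> [simp; positivity]
  have h2 : 0 ≤ ((4*π*r)^m)⁻¹ := by positivity
  nlinarith

lemma hk_continuous (m : ℕ) (r : ℝ) : Continuous (hk m r) := by
  unfold hk; fun_prop

lemma hk_integral (m : ℕ) {r : ℝ} (hr : 0 < r) : ∫ x, hk m r x = 1 := by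
  unfold hk
  rw [integral_const_mul]
  have := GaussianFourier.integral_rexp_neg_mul_sq_norm (V := VV (2*m)) (b := 1/(4*r)) (by positivity)
  have e : ∀ x : VV (2*m), Real.exp (-‖x‖^2/(4*r)) = Real.exp (-(1/(4*r)) * ‖x‖^2) := by
    intro x; congr 1; ring
  simp only [e]
  rw [this]
  simp only [finrank_euclideanSpace, Fintype.card_fin]
  have e2 : (((2*m : ℕ) : ℝ)/2) = (m : ℝ) := by push_cast; ring
  rw [e2, Real.rpow_natCast]
  have e3 : π / (1/(4*r)) = 4*π*r := by field_simp
  rw [e3]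
  have : (4*π*r)^m ≠ 0 := by positivity
  field_simp

lemma hk_integrable (m : ℕ) {r : ℝ} (hr : 0 < r) : Integrable (hk m r) := by
  by_contra h
  have := hk_integral m hr
  rw [integral_undef h] at this
  norm_num at this

/-- gaussian weight -/
def gw {n : ℕ} (r : ℝ) (ξ : VV n) : ℝ := Real.exp (-(r * zz ξ))

lemma gw_continuous {n : ℕ} (r : ℝ) : Continuous (gw r : VV n → ℝ) := by
  unfold gw; have := zz_continuous (n := n); fun_prop

lemma gw_le_one {n : ℕ} {r : ℝ} (hr : 0 < r) (ξ : VV n) : gw r ξ ≤ 1 := by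
  unfold gw
  rw [Real.exp_le_one_iff]
  have := mul_nonneg hr.le (zz_nonneg ξ)
  linarith

lemma gw_integrable {n : ℕ} {r : ℝ} (hr : 0 < r) : Integrable (gw r : VV n → ℝ) := by
  have h : 0 < ((4*π^2*r : ℝ) : ℂ).re := by simp only [Complex.ofReal_re]; positivity
  have := (GaussianFourier.integrable_cexp_neg_mul_sq_norm_add (V := VV n) h 0 0).norm
  refine this.congr (Eventually.of_forall fun ξ => ?_)
  simp only [gw, zz]
  rw [Complex.norm_exp]
  congr 1
  have : (-((4*π^2*r : ℝ) : ℂ) * (‖ξ‖:ℂ)^2 + 0 * ((inner ℝ (0:VV n) ξ : ℝ) : ℂ)) = ((-(4*π^2*r)*‖ξ‖^2 : ℝ) : ℂ) := by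
    push_cast; ring
  rw [this, Complex.ofReal_re]; ring

lemma FT_continuous {n : ℕ} {f : VV n → ℝ} (hf : Integrable f) : Continuous (FT f) :=
  VectorFourier.fourierIntegral_continuous Real.continuous_fourierChar continuous_inner hf.ofReal

lemma FT_norm_le {n : ℕ} (f : VV n → ℝ) (ξ : VV n) : ‖FT f ξ‖ ≤ ∫ x, |f x| := by
  refine (VectorFourier.norm_fourierIntegral_le_integral_norm _ _ _ _ _).trans ?_
  simp

lemma gw_inv (m : ℕ) {r : ℝ} (hr : 0 < r) {h : VV (2*m) → ℝ} (hh : Integrable h) (x : VV (2*m)) :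
    𝓕⁻ (fun ξ => (gw r ξ : ℂ) * FT h ξ) x = ((∫ y, h y * hk m r (x - y) : ℝ) : ℂ) := by
  have hb : 0 < ((4*π^2*r : ℝ) : ℂ).re := by simp only [Complex.ofReal_re]; positivity
  have hInt0 : Integrable (fun ξ : VV (2*m) =>
      Complex.exp (-((4*π^2*r : ℝ) : ℂ) * (‖ξ‖:ℂ)^2 + 2 * π * Complex.I * ((inner ℝ x ξ : ℝ) : ℂ))) :=
    GaussianFourier.integrable_cexp_neg_mul_sq_norm_add hb _ x
  have key := selfadj hh hInt0
  have hF := fun y => fourier_gaussian_innerProductSpace' (V := VV (2*m)) hb x y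
  simp only [hF] at key
  rw [Real.fourierInv_eq', ← integral_complex_ofReal]
  convert key using 1
  · congr 1; ext ξ
    simp only [smul_eq_mul, gw, zz]
    rw [Complex.ofReal_exp, mul_comm (FT h ξ), ← mul_assoc, ← Complex.exp_add]
    congr 2
    rw [real_inner_comm]
    push_cast; ring
  · congr 1; ext y
    rw [Complex.ofReal_mul]
    congr 1
    simp only [hk, finrank_euclideanSpace, Fintype.card_fin]
    have e2 : (((2*m : ℕ) : ℂ)/2) = (m : ℂ) := by push_cast; ring
    have e3 : (π:ℂ) / ((4*π^2*r : ℝ):ℂ) = ((4*π*r : ℝ) : ℂ)⁻¹ := by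
      push_cast
      have : (r:ℂ) ≠ 0 := by exact_mod_cast hr.ne'
      have : (π:ℂ) ≠ 0 := by exact_mod_cast Real.pi_ne_zero
      field_simp
    rw [e2, e3, Complex.cpow_natCast]
    have e4 : (-(π:ℂ)^2 * (‖x-y‖:ℂ)^2 / ((4*π^2*r : ℝ):ℂ)) = ((-‖x-y‖^2/(4*r) : ℝ) : ℂ) := by
      push_cast
      have : (r:ℂ) ≠ 0 := by exact_mod_cast hr.ne'
      have : (π:ℂ) ≠ 0 := by exact_mod_cast Real.pi_ne_zero
      field_simp
    rw [e4]
    push_cast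
    rw [inv_pow]

/-- normalised indicator -/
def ni {n : ℕ} (E : Set (VV n)) : VV n → ℝ := E.indicator (fun _ => (volume.real E)⁻¹)

lemma ni_integrable {n : ℕ} {E : Set (VV n)} (hE : MeasurableSet E) (hfin : volume E ≠ ⊤) :
    Integrable (ni E) := by
  unfold ni
  rw [integrable_indicator_iff hE]
  exact integrableOn_const hfin

lemma ni_nonneg {n : ℕ} (E : Set (VV n)) (x : VV n) : 0 ≤ ni E x := by
  unfold ni; apply Set.indicator_nonneg; intros; positivity

lemma ni_le {n : ℕ} (E : Set (VV n)) (x : VV n) : ni E x ≤ (volume.real E)⁻¹ := by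
  unfold ni
  apply Set.indicator_le_self' (s := E) (f := fun _ => (volume.real E)⁻¹)
  intros; positivity

lemma ni_integral {n : ℕ} {E : Set (VV n)} (hE : MeasurableSet E) (hpos : 0 < volume.real E) :
    ∫ x, ni E x = 1 := by
  unfold ni
  rw [integral_indicator hE]
  simp [Measure.real] at *
  exact mul_inv_cancel₀ hpos.ne'

/-- bound of convolution with the heat kernel -/
lemma hk_conv_le (m : ℕ) {r : ℝ} (hr : 0 < r) {E : Set (VV (2*m))} (hE : MeasurableSet E)
    (hpos : 0 < volume.real E) (hfin : volume E ≠ ⊤) (x : VV (2*m)) :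
    ∫ y, ni E y * hk m r (x - y) ≤ min ((4*π*r)^m)⁻¹ (volume.real E)⁻¹ := by
  have hI : Integrable (fun y => ni E y * hk m r (x - y)) := by
    refine (ni_integrable hE hfin).mul_bdd (c := ((4*π*r)^m)⁻¹) ?_ ?_
    · exact ((hk_continuous m r).comp (continuous_const.sub continuous_id)).aestronglyMeasurable
    · refine Eventually.of_forall fun y => ?_
      rw [Real.norm_of_nonneg (hk_nonneg m hr _)]
      exact hk_le m hr _
  refine le_min ?_ ?_
  · calc _ ≤ ∫ y, ni E y * ((4*π*r)^m)⁻¹ := by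
          refine integral_mono hI ((ni_integrable hE hfin).mul_const _) fun y => ?_
          exact mul_le_mul_of_nonneg_left (hk_le m hr _) (ni_nonneg E y)
      _ = _ := by rw [integral_mul_const, ni_integral hE hpos, one_mul]
  · have hI2 : Integrable (fun y => hk m r (x - y)) := (hk_integrable m hr).comp_sub_left x
    calc _ ≤ ∫ y, (volume.real E)⁻¹ * hk m r (x - y) := by
          refine integral_mono hI (hI2.const_mul _) fun y => ?_
          exact mul_le_mul_of_nonneg_right (ni_le E y) (hk_nonneg m hr _)
      _ = _ := by
          rw [integral_const_mul, integral_sub_left_eq_self (hk m r) volume x, hk_integral m hr, mul_one]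

lemma gw_cross (m : ℕ) {r : ℝ} (hr : 0 < r) {E E' : Set (VV (2*m))} (hE : MeasurableSet E)
    (hpos : 0 < volume.real E) (hfin : volume E ≠ ⊤) (hE' : MeasurableSet E')
    (hpos' : 0 < volume.real E') (hfin' : volume E' ≠ ⊤) :
    (∫ ξ, (starRingEnd ℂ) (FT (ni E') ξ) * ((gw r ξ : ℂ) * FT (ni E) ξ)).re
      ≤ min ((4*π*r)^m)⁻¹ (volume.real E)⁻¹ := by
  have hiE := ni_integrable hE hfin
  have hiE' := ni_integrable hE' hfin'
  have hG : Integrable (fun ξ => (gw r ξ : ℂ) * FT (ni E) ξ) := by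
    refine (gw_integrable hr).ofReal.mul_bdd (c := ∫ x, |ni E x|) ?_ ?_
    · exact (FT_continuous hiE).aestronglyMeasurable
    · exact Eventually.of_forall fun ξ => FT_norm_le _ _
  rw [parseval hiE' hG]
  simp only [gw_inv m hr hiE]
  simp only [← Complex.ofReal_mul]
  rw [integral_complex_ofReal, Complex.ofReal_re]
  set M := min ((4*π*r)^m)⁻¹ (volume.real E)⁻¹ with hM
  have hM0 : 0 ≤ M := by positivity
  calc _ ≤ ∫ x, ni E' x * M := by
        apply integral_mono_of_nonneg
        · refine Eventually.of_forall fun x => mul_nonneg (ni_nonneg _ _) ?_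
          exact integral_nonneg fun y => mul_nonneg (ni_nonneg _ _) (hk_nonneg m hr _)
        · exact hiE'.mul_const _
        · refine Eventually.of_forall fun x => mul_le_mul_of_nonneg_left ?_ (ni_nonneg _ _)
          exact hk_conv_le m hr hE hpos hfin x
    _ = M := by rw [integral_mul_const, ni_integral hE' hpos', one_mul]

lemma gw_int_mul {n : ℕ} {r : ℝ} (hr : 0 < r) {f g : VV n → ℝ} (hf : Integrable f) (hg : Integrable g) :
    Integrable (fun ξ => (starRingEnd ℂ) (FT f ξ) * ((gw r ξ : ℂ) * FT g ξ)) := by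
  have h1 : Integrable (fun ξ => (gw r ξ : ℂ) * FT g ξ) := by
    refine (gw_integrable hr).ofReal.mul_bdd (c := ∫ x, |g x|) ?_ ?_
    · exact (FT_continuous hg).aestronglyMeasurable
    · exact Eventually.of_forall fun ξ => FT_norm_le _ _
  refine h1.bdd_mul (c := ∫ x, |f x|) ?_ ?_
  · exact (Complex.continuous_conj.comp (FT_continuous hf)).aestronglyMeasurable
  · exact Eventually.of_forall fun ξ => by simpa using FT_norm_le f ξ

lemma gw_pair (m : ℕ) {r : ℝ} (hr : 0 < r) {E E' : Set (VV (2*m))} (hE : MeasurableSet E)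
    (hpos : 0 < volume.real E) (hfin : volume E ≠ ⊤) (hE' : MeasurableSet E')
    (hpos' : 0 < volume.real E') (hfin' : volume E' ≠ ⊤) :
    Integrable (fun ξ => gw r ξ * ‖FT (ni E) ξ + FT (ni E') ξ‖^2) ∧
    ∫ ξ, gw r ξ * ‖FT (ni E) ξ + FT (ni E') ξ‖^2
      ≤ 3 * min ((4*π*r)^m)⁻¹ (volume.real E)⁻¹ + min ((4*π*r)^m)⁻¹ (volume.real E')⁻¹ := by
  have hiE := ni_integrable hE hfin
  have hiE' := ni_integrable hE' hfin'
  have a11 := gw_cross m hr hE hpos hfin hE hpos hfin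
  have a12 := gw_cross m hr hE hpos hfin hE' hpos' hfin'
  have a22 := gw_cross m hr hE' hpos' hfin' hE' hpos' hfin'
  have i11 := gw_int_mul hr hiE hiE
  have i12 := gw_int_mul hr hiE' hiE
  have i22 := gw_int_mul hr hiE' hiE'
  have r11 : _ = RCLike.re _ := integral_re i11
  have r12 : _ = RCLike.re _ := integral_re i12
  have r22 : _ = RCLike.re _ := integral_re i22
  have e : ∀ ξ, gw r ξ * ‖FT (ni E) ξ + FT (ni E') ξ‖^2 =
      RCLike.re ((starRingEnd ℂ) (FT (ni E) ξ) * ((gw r ξ : ℂ) * FT (ni E) ξ))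
      + 2 * RCLike.re ((starRingEnd ℂ) (FT (ni E') ξ) * ((gw r ξ : ℂ) * FT (ni E) ξ))
      + RCLike.re ((starRingEnd ℂ) (FT (ni E') ξ) * ((gw r ξ : ℂ) * FT (ni E') ξ)) := by
    intro ξ
    rw [← Complex.normSq_eq_norm_sq, Complex.normSq_apply]
    simp
    ring
  have hsum : Integrable (fun ξ => RCLike.re ((starRingEnd ℂ) (FT (ni E) ξ) * ((gw r ξ : ℂ) * FT (ni E) ξ))
      + 2 * RCLike.re ((starRingEnd ℂ) (FT (ni E') ξ) * ((gw r ξ : ℂ) * FT (ni E) ξ))) :=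
    i11.re.add (i12.re.const_mul 2)
  simp only [e]
  refine ⟨hsum.add i22.re, ?_⟩
  rw [integral_add hsum i22.re, integral_add i11.re (i12.re.const_mul 2),
    integral_const_mul, r11, r12, r22]
  simp only [RCLike.re_to_complex]
  linarith

lemma betaStar_eq (m : ℕ) : betaStar m = (4*π)^m * (m.factorial : ℝ) := by
  unfold betaStar
  rw [mul_pow, pow_mul]; norm_num

lemma betaStar_pos (m : ℕ) : 0 < betaStar m := by
  unfold betaStar; positivity

lemma scalarJ (m : ℕ) (hm : 1 ≤ m) {A a : ℝ} (hA : 1 ≤ A) (ha : 0 < a) (haA : a ≤ A) :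
    ∫⁻ r in Set.Ioc (0:ℝ) 1, ENNReal.ofReal
        (r^(m-1) / ((m-1).factorial : ℝ) * min ((4*π*r)^m)⁻¹ a⁻¹)
      ≤ ENNReal.ofReal ((1/betaStar m) * (((4*π)^m + Real.log A) - Real.log a)) := by
  have hm0 : (m:ℝ) ≠ 0 := by positivity
  have hA0 : 0 < A := by linarith
  set f : ℝ := ((m-1).factorial : ℝ) with hf
  have hfm : (m.factorial : ℝ) = m * f := by
    rw [hf, ← Nat.mul_factorial_pred (by omega)]; push_cast; ring
  have hf0 : 0 < f := by rw [hf]; positivity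
  set r0 : ℝ := (a/A)^(1/(m:ℝ)) with hr0
  have haA1 : a/A ≤ 1 := by rw [div_le_one hA0]; exact haA
  have hr0pos : 0 < r0 := by rw [hr0]; positivity
  have hr01 : r0 ≤ 1 := Real.rpow_le_one (by positivity) haA1 (by positivity)
  have hr0m : r0^m = a/A := by
    rw [hr0, ← Real.rpow_natCast, ← Real.rpow_mul (by positivity)]
    rw [one_div_mul_cancel hm0, Real.rpow_one]
  have hlog : Real.log r0 = (Real.log a - Real.log A)/m := by
    rw [hr0, Real.log_rpow (by positivity), Real.log_div ha.ne' hA0.ne']; ring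
  have hsplit : Set.Ioc (0:ℝ) 1 = Set.Ioc 0 r0 ∪ Set.Ioc r0 1 :=
    (Set.Ioc_union_Ioc_eq_Ioc hr0pos.le hr01).symm
  rw [hsplit]
  refine (lintegral_union_le _ _ _).trans ?_
  have h1 : ∫⁻ r in Set.Ioc (0:ℝ) r0, ENNReal.ofReal
        (r^(m-1) / f * min ((4*π*r)^m)⁻¹ a⁻¹) ≤ ENNReal.ofReal (1/(m.factorial * A)) := by
    calc _ ≤ ∫⁻ r in Set.Ioc (0:ℝ) r0, ENNReal.ofReal (r^(m-1) * (1/(f * a))) := by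
          refine setLIntegral_mono' measurableSet_Ioc fun r hr => ENNReal.ofReal_le_ofReal ?_
          have : r^(m-1) * (1/(f * a)) = r^(m-1) / f * a⁻¹ := by field_simp
          rw [this]
          exact mul_le_mul_of_nonneg_left (min_le_right _ _)
            (div_nonneg (pow_nonneg hr.1.le _) hf0.le)
      _ = ENNReal.ofReal (∫ r in Set.Ioc (0:ℝ) r0, r^(m-1) * (1/(f * a))) := by
          rw [ofReal_integral_eq_lintegral_ofReal]
          · exact (((continuous_pow _).mul continuous_const).integrableOn_Icc).mono_set Set.Ioc_subset_Icc_self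
          · filter_upwards [ae_restrict_mem measurableSet_Ioc] with r hr
            have := hr.1
            positivity
      _ ≤ _ := by
          apply le_of_eq; congr 1
          rw [integral_mul_const, ← intervalIntegral.integral_of_le hr0pos.le, integral_pow]
          have hm1 : m - 1 + 1 = m := by omega
          have hm2 : ((m-1 : ℕ):ℝ) + 1 = m := by
            rw [← hm1]; push_cast; simp
          rw [hm1, hm2, hr0m, zero_pow (by omega), hfm]
          field_simp; ring
  have h2 : ∫⁻ r in Set.Ioc r0 1, ENNReal.ofReal
        (r^(m-1) / f * min ((4*π*r)^m)⁻¹ a⁻¹) ≤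
          ENNReal.ofReal ((1/betaStar m) * (Real.log A - Real.log a)) := by
    calc _ ≤ ∫⁻ r in Set.Ioc r0 1, ENNReal.ofReal (r⁻¹ * (1/(f * (4*π)^m))) := by
          refine setLIntegral_mono' measurableSet_Ioc fun r hr => ENNReal.ofReal_le_ofReal ?_
          have hr' : 0 < r := hr0pos.trans hr.1
          have : r⁻¹ * (1/(f * (4*π)^m)) = r^(m-1) / f * ((4*π*r)^m)⁻¹ := by
            have hm1 : m = m - 1 + 1 := by omega
            rw [mul_pow _ r, show r^m = r^(m-1)*r by rw [← pow_succ, ← hm1]]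
            field_simp
          rw [this]
          exact mul_le_mul_of_nonneg_left (min_le_left _ _)
            (div_nonneg (pow_nonneg hr'.le _) hf0.le)
      _ = ENNReal.ofReal (∫ r in Set.Ioc r0 1, r⁻¹ * (1/(f * (4*π)^m))) := by
          rw [ofReal_integral_eq_lintegral_ofReal]
          · refine (ContinuousOn.integrableOn_Icc ?_).mono_set Set.Ioc_subset_Icc_self
            refine ContinuousOn.mul (ContinuousOn.inv₀ continuousOn_id ?_) continuousOn_const
            intro x hx; exact (hr0pos.trans_le hx.1).ne'
          · filter_upwards [ae_restrict_mem measurableSet_Ioc] with r hr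
            have := hr0pos.trans hr.1
            positivity
      _ ≤ _ := by
          apply le_of_eq; congr 1
          rw [integral_mul_const, ← intervalIntegral.integral_of_le hr01,
            integral_inv_of_pos hr0pos one_pos, one_div, Real.log_inv, hlog, betaStar_eq, hfm]
          field_simp; ring
  refine (add_le_add h1 h2).trans ?_
  have hl : 0 ≤ Real.log A - Real.log a := by
    have := Real.log_le_log ha haA; linarith
  rw [← ENNReal.ofReal_add (by positivity) (mul_nonneg (by have := betaStar_pos m; positivity) hl)]
  apply ENNReal.ofReal_le_ofReal
  have : (1 / (↑m.factorial * A) : ℝ) ≤ 1/betaStar m * (4*π)^m := by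
    rw [betaStar_eq]
    have : (1 / ((4 * π) ^ m * (m.factorial:ℝ)) * (4 * π) ^ m : ℝ) = 1/(m.factorial:ℝ) := by
      field_simp
    rw [this]
    apply one_div_le_one_div_of_le (by positivity)
    have : (0:ℝ) < m.factorial := by positivity
    nlinarith
  have e : 1 / betaStar m * ((4 * π) ^ m + Real.log A - Real.log a) = 1 / betaStar m * (4*π)^m
    + 1 / betaStar m * (Real.log A - Real.log a) := by ring
  rw [e]; linarith

/-- truncated Bessel weight -/
def bb {n : ℕ} (m : ℕ) (ξ : VV n) : ℝ :=
  ∫ r in Set.Ioc (0:ℝ) 1, r^(m-1) / ((m-1).factorial : ℝ) * gw r ξ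

lemma gw_cont2 {n : ℕ} : Continuous (fun p : VV n × ℝ => gw p.2 p.1) := by
  unfold gw
  have := zz_continuous (n := n)
  fun_prop

lemma gw_pos {n : ℕ} (r : ℝ) (ξ : VV n) : 0 < gw r ξ := Real.exp_pos _

lemma bb_integrand {n : ℕ} (m : ℕ) (ξ : VV n) :
    IntegrableOn (fun r => r^(m-1) / ((m-1).factorial : ℝ) * gw r ξ) (Set.Ioc (0:ℝ) 1) := by
  refine (Continuous.integrableOn_Icc ?_).mono_set Set.Ioc_subset_Icc_self
  unfold gw
  fun_prop

lemma bb_nonneg {n : ℕ} (m : ℕ) (ξ : VV n) : 0 ≤ bb m ξ := by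
  refine setIntegral_nonneg measurableSet_Ioc fun r hr => ?_
  have := gw_pos r ξ
  have := hr.1
  positivity

lemma bb_ofReal {n : ℕ} (m : ℕ) (ξ : VV n) : ENNReal.ofReal (bb m ξ) =
    ∫⁻ r in Set.Ioc (0:ℝ) 1, ENNReal.ofReal (r^(m-1) / ((m-1).factorial : ℝ) * gw r ξ) := by
  unfold bb
  rw [ofReal_integral_eq_lintegral_ofReal (bb_integrand m ξ)]
  filter_upwards [ae_restrict_mem measurableSet_Ioc] with r hr
  have := gw_pos r ξ
  have := hr.1
  positivity

lemma bb_pair (m : ℕ) (hm : 1 ≤ m) {A : ℝ} (hA : 1 ≤ A) {E E' : Set (VV (2*m))} (hE : MeasurableSet E)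
    (hpos : 0 < volume.real E) (hfin : volume E ≠ ⊤) (hE' : MeasurableSet E')
    (hpos' : 0 < volume.real E') (hfin' : volume E' ≠ ⊤) (hEA : volume.real E ≤ A)
    (hEA' : volume.real E' ≤ A) :
    ∫⁻ ξ, ENNReal.ofReal (bb m ξ) * ENNReal.ofReal (‖FT (ni E) ξ + FT (ni E') ξ‖^2)
      ≤ ENNReal.ofReal ((1/betaStar m) * (3 * (((4*π)^m + Real.log A) - Real.log (volume.real E))
          + (((4*π)^m + Real.log A) - Real.log (volume.real E')))) := by
  have hcF : Continuous (fun ξ => FT (ni E) ξ + FT (ni E') ξ) :=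
    (FT_continuous (ni_integrable hE hfin)).add (FT_continuous (ni_integrable hE' hfin'))
  set f : ℝ := ((m-1).factorial : ℝ) with hf
  have hf0 : 0 < f := by rw [hf]; positivity
  simp only [bb_ofReal]
  have hmeas : Measurable (fun p : VV (2*m) × ℝ => ENNReal.ofReal (p.2^(m-1) / f * gw p.2 p.1)
      * ENNReal.ofReal (‖FT (ni E) p.1 + FT (ni E') p.1‖^2)) := by
    have := gw_cont2 (n := 2*m)
    have a1 : Measurable (fun p : VV (2*m) × ℝ => ENNReal.ofReal (p.2^(m-1) / f * gw p.2 p.1)) :=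
      (((continuous_snd.pow _).div_const _).mul this).measurable.ennreal_ofReal
    have a2 : Measurable (fun p : VV (2*m) × ℝ => ENNReal.ofReal (‖FT (ni E) p.1 + FT (ni E') p.1‖^2)) :=
      ((hcF.comp continuous_fst).norm.pow 2).measurable.ennreal_ofReal
    exact a1.mul a2
  calc _ = ∫⁻ ξ, ∫⁻ r in Set.Ioc (0:ℝ) 1, ENNReal.ofReal (r^(m-1) / f * gw r ξ)
        * ENNReal.ofReal (‖FT (ni E) ξ + FT (ni E') ξ‖^2) := by
        congr 1; ext ξ
        rw [lintegral_mul_const]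
        refine Continuous.measurable ?_ |>.ennreal_ofReal
        unfold gw; fun_prop
    _ = ∫⁻ r in Set.Ioc (0:ℝ) 1, ∫⁻ ξ, ENNReal.ofReal (r^(m-1) / f * gw r ξ)
        * ENNReal.ofReal (‖FT (ni E) ξ + FT (ni E') ξ‖^2) :=
        lintegral_lintegral_swap hmeas.aemeasurable
    _ ≤ ∫⁻ r in Set.Ioc (0:ℝ) 1, (3 * ENNReal.ofReal (r^(m-1) / f * min ((4*π*r)^m)⁻¹ (volume.real E)⁻¹)
          + ENNReal.ofReal (r^(m-1) / f * min ((4*π*r)^m)⁻¹ (volume.real E')⁻¹)) := by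
        refine setLIntegral_mono' measurableSet_Ioc fun r hr => ?_
        have hr0 := hr.1
        obtain ⟨gi, gp⟩ := gw_pair m hr.1 hE hpos hfin hE' hpos' hfin'
        have hc : 0 ≤ r^(m-1) / f := by positivity
        calc _ = ∫⁻ ξ, ENNReal.ofReal (r^(m-1)/f) * ENNReal.ofReal (gw r ξ * ‖FT (ni E) ξ + FT (ni E') ξ‖^2) := by
              congr 1; ext ξ
              have := (gw_pos r ξ).le
              rw [ENNReal.ofReal_mul hc, ENNReal.ofReal_mul this, mul_assoc]
          _ = ENNReal.ofReal (r^(m-1)/f) * ENNReal.ofReal (∫ ξ, gw r ξ * ‖FT (ni E) ξ + FT (ni E') ξ‖^2) := by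
              rw [lintegral_const_mul', ofReal_integral_eq_lintegral_ofReal gi]
              · refine Eventually.of_forall fun ξ => ?_
                have := (gw_pos r ξ).le
                positivity
              · exact ENNReal.ofReal_ne_top
          _ ≤ ENNReal.ofReal (r^(m-1)/f) * ENNReal.ofReal (3 * min ((4*π*r)^m)⁻¹ (volume.real E)⁻¹ + min ((4*π*r)^m)⁻¹ (volume.real E')⁻¹) := by
              gcongr
          _ = _ := by
              rw [← ENNReal.ofReal_mul hc]
              rw [show (3:ℝ≥0∞) = ENNReal.ofReal 3 by simp, ← ENNReal.ofReal_mul (by norm_num),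
                ← ENNReal.ofReal_add (by positivity) (by positivity)]
              congr 1; ring
    _ ≤ _ := by
        have m1 : ∀ a : ℝ, Measurable (fun r : ℝ => ENNReal.ofReal (r^(m-1) / f * min ((4*π*r)^m)⁻¹ a)) := by
          intro a
          fun_prop
        rw [lintegral_add_left ((m1 _).const_mul _), lintegral_const_mul _ (m1 _)]
        refine (add_le_add (mul_le_mul_right (scalarJ m hm hA hpos hEA) 3) (scalarJ m hm hA hpos' hEA')).trans ?_
        have hb := betaStar_pos m
        have l1 := Real.log_le_log hpos hEA
        have l2 := Real.log_le_log hpos' hEA'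
        have p1 : 0 ≤ (4*π)^m := by positivity
        rw [show (3:ℝ≥0∞) = ENNReal.ofReal 3 by simp, ← ENNReal.ofReal_mul (by norm_num),
                ← ENNReal.ofReal_add]
        · apply le_of_eq; congr 1; ring
        · refine mul_nonneg (by norm_num) (mul_nonneg (by positivity) (by linarith))
        · refine (mul_nonneg (by positivity) (by linarith))

lemma zpow_le_bb {n : ℕ} (m : ℕ) (hm : 1 ≤ m) (ξ : VV n) (hz : 0 < zz ξ) :
    (zz ξ ^ m)⁻¹ ≤ bb m ξ + ((2*m-1).factorial : ℝ) * (zz ξ ^ (2*m))⁻¹ := by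
  set f : ℝ := ((m-1).factorial : ℝ) with hf
  have hf0 : 0 < f := by rw [hf]; positivity
  have hf1 : 1 ≤ f := by rw [hf]; exact_mod_cast Nat.one_le_iff_ne_zero.mpr (Nat.factorial_ne_zero _)
  have key : ∀ k : ℕ, 1 ≤ k → ∫ r in Set.Ioi (0:ℝ), r^(k-1) * gw r ξ = ((k-1).factorial : ℝ) * (zz ξ^k)⁻¹ := by
    intro k hk
    have := Real.integral_rpow_mul_exp_neg_mul_Ioi (a := k) (r := zz ξ) (by positivity) hz
    have hk1 : (k:ℝ) = ((k-1 : ℕ):ℝ) + 1 := by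
      have : k = k - 1 + 1 := by omega
      exact_mod_cast this
    rw [hk1, Real.Gamma_nat_eq_factorial, ← hk1, Real.rpow_natCast, one_div, inv_pow] at this
    rw [mul_comm, ← this]
    refine setIntegral_congr_fun measurableSet_Ioi fun r hr => ?_
    simp only [gw]
    rw [hk1, add_sub_cancel_right, Real.rpow_natCast, mul_comm r]
  have k1 := key m hm
  have k2 := key (2*m) (by omega)
  have i2 : IntegrableOn (fun r => r^(2*m-1) * gw r ξ) (Set.Ioi (0:ℝ)) := by
    by_contra h
    rw [integral_undef h] at k2
    have : 0 < ((2*m-1).factorial : ℝ) * (zz ξ^(2*m))⁻¹ := by positivity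
    linarith
  have i1 : IntegrableOn (fun r => r^(m-1) / f * gw r ξ) (Set.Ioc (0:ℝ) 1) := bb_integrand m ξ
  have i3 : IntegrableOn ((Set.Ioc (0:ℝ) 1).indicator (fun r => r^(m-1) / f * gw r ξ)) (Set.Ioi (0:ℝ)) := by
    refine Integrable.integrableOn ?_
    rw [integrable_indicator_iff measurableSet_Ioc]; exact i1
  have e3 : ∫ r in Set.Ioi (0:ℝ), (Set.Ioc (0:ℝ) 1).indicator (fun r => r^(m-1) / f * gw r ξ) r = bb m ξ := by
    rw [setIntegral_indicator measurableSet_Ioc]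
    congr 2
    ext x; simp +contextual
  have i4 : IntegrableOn (fun r => (Set.Ioc (0:ℝ) 1).indicator (fun r => r^(m-1) / f * gw r ξ) r + r^(2*m-1) * gw r ξ) (Set.Ioi (0:ℝ)) :=
    Integrable.add i3 i2
  have hmono : ∫ r in Set.Ioi (0:ℝ), r^(m-1)* gw r ξ * (1/f) ≤
      ∫ r in Set.Ioi (0:ℝ), ((Set.Ioc (0:ℝ) 1).indicator (fun r => r^(m-1) / f * gw r ξ) r + r^(2*m-1) * gw r ξ) := by
    refine integral_mono_of_nonneg ?_ i4 ?_
    · filter_upwards [ae_restrict_mem measurableSet_Ioi] with r hr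
      have := gw_pos r ξ
      have hr' : 0 < r := hr
      positivity
    · filter_upwards [ae_restrict_mem measurableSet_Ioi] with r hr
      have hg := gw_pos r ξ
      have hr' : 0 < r := hr
      by_cases h1 : r ≤ 1
      · rw [Set.indicator_of_mem (by exact ⟨hr', h1⟩)]
        have : r^(m-1)* gw r ξ * (1/f) = r^(m-1) / f * gw r ξ := by ring
        rw [this]
        have : 0 ≤ r^(2*m-1) * gw r ξ := by positivity
        linarith
      · rw [Set.indicator_of_notMem (fun h => h1 h.2), zero_add]
        push Not at h1
        have p : r^(m-1) ≤ r^(2*m-1) := pow_le_pow_right₀ h1.le (by omega)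
        calc _ ≤ r^(m-1)* gw r ξ * 1 := by
              apply mul_le_mul_of_nonneg_left _ (by positivity)
              rw [div_le_one hf0]; exact hf1
          _ ≤ _ := by rw [mul_one]; exact mul_le_mul_of_nonneg_right p hg.le
  rw [integral_mul_const, k1, integral_add i3 i2, e3, k2] at hmono
  have e : f * (zz ξ^m)⁻¹ * (1/f) = (zz ξ^m)⁻¹ := by field_simp
  rw [e] at hmono
  exact hmono

/-- the weight -/
def cw {n : ℕ} (m : ℕ) (L d : ℝ) (ξ : VV n) : ℝ := zz ξ ^ m - min (zz ξ ^ m) L + d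

lemma cw_ge {n : ℕ} (m : ℕ) (L d : ℝ) (ξ : VV n) : d ≤ cw m L d ξ := by
  unfold cw; have := min_le_left (zz ξ ^ m) L; linarith

lemma cw_continuous {n : ℕ} (m : ℕ) (L d : ℝ) : Continuous (cw m L d : VV n → ℝ) := by
  unfold cw; have := zz_continuous (n := n); fun_prop

lemma cw_inv_le {n : ℕ} (m : ℕ) (hm : 1 ≤ m) {L d : ℝ} (hL : 0 ≤ L) (hd : 0 < d) :
    ∃ K : ℝ, 0 ≤ K ∧ ∀ ξ : VV n, (cw m L d ξ)⁻¹ ≤ bb m ξ + K * ((1 + ‖ξ‖^2)^(2*m))⁻¹ := by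
  refine ⟨max ((((2*m-1).factorial : ℝ) + 2*L) * 2^(2*m)) (d⁻¹ * (2*L+2)^(2*m)), by positivity, fun ξ => ?_⟩
  have hz0 := zz_nonneg ξ
  have hxz : ‖ξ‖^2 ≤ zz ξ := by
    unfold zz
    rw [mul_pow]
    have : 1 ≤ (2*π)^2 := by nlinarith [Real.pi_gt_three]
    nlinarith [sq_nonneg ‖ξ‖]
  set z := zz ξ with hz
  have hq : 0 < 1 + ‖ξ‖^2 := by positivity
  by_cases h : 2*L+1 ≤ z^m
  · have hz1 : 1 ≤ z := by
      by_contra hc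
      push Not at hc
      have := pow_lt_one₀ hz0 hc (by omega : m ≠ 0)
      linarith
    have hzp : 0 < z := by linarith
    have a1 : (cw m L d ξ)⁻¹ ≤ (z^m)⁻¹ + 2*L*(z^(2*m))⁻¹ := by
      have hc : z^m - L ≤ cw m L d ξ := by
        unfold cw; have := min_le_right (zz ξ ^ m) L; rw [← hz] at *; linarith
      have hw : 0 < z^m - L := by linarith
      refine (inv_anti₀ hw hc).trans ?_
      rw [two_mul m, pow_add]
      set w := z^m
      have hw0 : 0 < w := by linarith
      have : w⁻¹ + 2*L*(w*w)⁻¹ = (w + 2*L)/(w*w) := by field_simp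
      rw [this, inv_eq_one_div, div_le_div_iff₀ hw (by positivity)]
      nlinarith
    have a2 := zpow_le_bb m hm ξ hzp
    rw [← hz] at a2
    have a3 : (z^(2*m))⁻¹ ≤ 2^(2*m) * ((1 + ‖ξ‖^2)^(2*m))⁻¹ := by
      rw [← div_eq_mul_inv, inv_eq_one_div, div_le_div_iff₀ (by positivity) (by positivity), one_mul, ← mul_pow]
      apply pow_le_pow_left₀ hq.le
      linarith
    calc _ ≤ bb m ξ + (((2*m-1).factorial : ℝ) + 2*L) * (z^(2*m))⁻¹ := by linarith
      _ ≤ bb m ξ + (((2*m-1).factorial : ℝ) + 2*L) * (2^(2*m) * ((1 + ‖ξ‖^2)^(2*m))⁻¹) := by gcongr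
      _ ≤ _ := by
          rw [← mul_assoc]
          gcongr
          exact le_max_left _ _
  · push Not at h
    have hz1 : z ≤ 2*L+1 := by
      by_cases hc : z ≤ 1
      · linarith
      · push Not at hc
        have := le_self_pow₀ hc.le (by omega : m ≠ 0)
        linarith
    have a1 : (cw m L d ξ)⁻¹ ≤ d⁻¹ := inv_anti₀ hd (cw_ge m L d ξ)
    have a2 : 1 ≤ (2*L+2)^(2*m) * ((1 + ‖ξ‖^2)^(2*m))⁻¹ := by
      rw [← div_eq_mul_inv, one_le_div (by positivity)]
      apply pow_le_pow_left₀ hq.le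
      linarith
    have hb := bb_nonneg m ξ
    have hd' : 0 < d⁻¹ := by positivity
    calc _ ≤ d⁻¹ * ((2*L+2)^(2*m) * ((1 + ‖ξ‖^2)^(2*m))⁻¹) := by nlinarith
      _ ≤ max ((((2*m-1).factorial : ℝ) + 2*L) * 2^(2*m)) (d⁻¹ * (2*L+2)^(2*m)) * ((1 + ‖ξ‖^2)^(2*m))⁻¹ := by
          rw [← mul_assoc]
          gcongr
          exact le_max_right _ _
      _ ≤ _ := by linarith

lemma japan_integrable (m : ℕ) (hm : 1 ≤ m) : Integrable (fun ξ : VV (2*m) => ((1 + ‖ξ‖^2)^(2*m))⁻¹) := by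
  have := integrable_rpow_neg_one_add_norm_sq (E := VV (2*m)) (μ := volume) (r := 4*m) (by
    simp only [finrank_euclideanSpace, Fintype.card_fin]; push_cast
    have : (1:ℝ) ≤ m := by exact_mod_cast hm
    linarith)
  refine this.congr (Eventually.of_forall fun ξ => ?_)
  simp only
  rw [show (-(4*(m:ℝ))/2) = -((2*m : ℕ):ℝ) by push_cast; ring, Real.rpow_neg (by positivity), Real.rpow_natCast]

lemma Cc.FT_integrable {n : ℕ} {u : VV n → ℝ} (h : Cc u) : Integrable (FT u) := by
  rw [h.FT_eq]; exact (𝓕 h.S).integrable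

lemma Cc.FT_inv {n : ℕ} {u : VV n → ℝ} (h : Cc u) (x : VV n) : 𝓕⁻ (FT u) x = (u x : ℂ) := by
  have hc : Continuous (fun x => ((u x : ℝ) : ℂ)) := Complex.continuous_ofReal.comp h.1.continuous
  have := Continuous.fourierInv_fourier_eq hc h.integrable.ofReal h.FT_integrable
  exact congrFun this x

lemma ni_lower {n : ℕ} {u : VV n → ℝ} (hu : Cc u) {E : Set (VV n)} (hE : MeasurableSet E)
    (hpos : 0 < volume.real E) (hfin : volume E ≠ ⊤) {s : ℝ} (hs : ∀ x ∈ E, s ≤ u x) :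
    s ≤ (∫ ξ, (starRingEnd ℂ) (FT (ni E) ξ) * FT u ξ).re := by
  have hi := ni_integrable hE hfin
  rw [parseval hi hu.FT_integrable]
  simp only [hu.FT_inv, ← Complex.ofReal_mul]
  rw [integral_complex_ofReal, Complex.ofReal_re]
  have hInt0 : Integrable (fun x => ni E x * u x) := by
    obtain ⟨C, hC⟩ := hu.1.continuous.bounded_above_of_compact_support hu.2
    exact hi.mul_bdd (c := C) hu.1.continuous.aestronglyMeasurable (Eventually.of_forall hC)
  calc s = ∫ x, ni E x * s := by rw [integral_mul_const, ni_integral hE hpos, one_mul]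
    _ ≤ _ := by
      refine integral_mono (hi.mul_const _) hInt0 fun x => ?_
      by_cases hx : x ∈ E
      · exact mul_le_mul_of_nonneg_left (hs x hx) (ni_nonneg _ _)
      · simp [ni, hx]

lemma FT_ni_le {n : ℕ} {E : Set (VV n)} (hE : MeasurableSet E)
    (hpos : 0 < volume.real E) (ξ : VV n) : ‖FT (ni E) ξ‖ ≤ 1 := by
  refine (FT_norm_le _ _).trans ?_
  simp only [abs_of_nonneg (ni_nonneg E _)]
  rw [ni_integral hE hpos]

lemma Cc.cw_integrable {n : ℕ} {u : VV n → ℝ} (h : Cc u) (m : ℕ) (L d : ℝ) (hL : 0 ≤ L) (hd : 0 ≤ d) :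
    Integrable (fun ξ => cw m L d ξ * ‖FT u ξ‖^2) := by
  have h1 := h.integrable_zz m
  have h0 := (h.integrable_zz 0).const_mul d
  simp only [pow_zero, one_mul] at h0
  refine (h1.add h0).mono' ?_ ?_
  · exact ((cw_continuous m L d).mul ((FT_continuous h.integrable).norm.pow 2)).aestronglyMeasurable
  · refine Eventually.of_forall fun ξ => ?_
    have hc : 0 ≤ cw m L d ξ := hd.trans (cw_ge m L d ξ)
    rw [Real.norm_of_nonneg (by positivity)]
    simp only [Pi.add_apply]
    rw [← add_mul]
    apply mul_le_mul_of_nonneg_right _ (by positivity)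
    unfold cw
    have : 0 ≤ min (zz ξ ^ m) L := le_min (pow_nonneg (zz_nonneg ξ) _) hL
    linarith

lemma pair_bound (m : ℕ) (hm : 1 ≤ m) {A L d : ℝ} (hA : 1 ≤ A) (hL : 0 ≤ L) (hd : 0 < d) :
    ∃ C : ℝ, 0 ≤ C ∧ ∀ u : VV (2*m) → ℝ, Cc u → ∫ ξ, cw m L d ξ * ‖FT u ξ‖^2 ≤ 1 →
    ∀ E E' : Set (VV (2*m)), MeasurableSet E → 0 < volume.real E → volume E ≠ ⊤ → volume.real E ≤ A →
      MeasurableSet E' → 0 < volume.real E' → volume E' ≠ ⊤ → volume.real E' ≤ A →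
      ∀ s s' : ℝ, 0 ≤ s → 0 ≤ s' → (∀ x ∈ E, s ≤ u x) → (∀ x ∈ E', s' ≤ u x) →
      betaStar m * (s + s')^2 ≤ 3 * (- Real.log (volume.real E)) + (- Real.log (volume.real E')) + 4 * C := by
  obtain ⟨K, hK0, hK⟩ := cw_inv_le (n := 2*m) m hm hL hd
  have hJ := japan_integrable m hm
  set J := ∫ ξ : VV (2*m), ((1 + ‖ξ‖^2)^(2*m))⁻¹ with hJdef
  have hJ0 : 0 ≤ J := integral_nonneg fun ξ => by positivity
  have hb := betaStar_pos m
  refine ⟨((4*π)^m + Real.log A) + betaStar m * (K * J), ?_, ?_⟩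
  · have := Real.log_nonneg hA; positivity
  intro u hu hu1 E E' hE hpos hfin hEA hE' hpos' hfin' hEA' s s' hs hs' hsu hsu'
  have hiE := ni_integrable hE hfin
  have hiE' := ni_integrable hE' hfin'
  set F : VV (2*m) → ℂ := fun ξ => FT (ni E) ξ + FT (ni E') ξ with hF
  have hcF : Continuous F := (FT_continuous hiE).add (FT_continuous hiE')
  have hF2 : ∀ ξ, ‖F ξ‖^2 ≤ 4 := by
    intro ξ
    have h1 := FT_ni_le hE hpos ξ
    have h2 := FT_ni_le hE' hpos' ξ
    have h3 : ‖F ξ‖ ≤ 2 := (norm_add_le _ _).trans (by linarith)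
    nlinarith [norm_nonneg (F ξ)]
  set C0 := (4*π)^m + Real.log A with hC0
  set Q : ℝ := (1/betaStar m) * (3 * (C0 - Real.log (volume.real E))
          + (C0 - Real.log (volume.real E'))) + 4 * (K*J) with hQ
  have l1 := Real.log_le_log hpos hEA
  have l2 := Real.log_le_log hpos' hEA'
  have p1 : 0 ≤ (4*π)^m := by positivity
  have hQ1 : 0 ≤ (1/betaStar m) * (3 * (C0 - Real.log (volume.real E))
          + (C0 - Real.log (volume.real E'))) := mul_nonneg (by positivity) (by linarith)
  have hQ0 : 0 ≤ Q := by positivity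
  have hcpos : ∀ ξ : VV (2*m), 0 < cw m L d ξ := fun ξ => hd.trans_le (cw_ge m L d ξ)
  have hlin : ∫⁻ ξ, ENNReal.ofReal ((cw m L d ξ)⁻¹ * ‖F ξ‖^2) ≤ ENNReal.ofReal Q := by
    calc _ ≤ ∫⁻ ξ, (ENNReal.ofReal (bb m ξ) * ENNReal.ofReal (‖F ξ‖^2) + ENNReal.ofReal (4*K*((1 + ‖ξ‖^2)^(2*m))⁻¹)) := by
          refine lintegral_mono fun ξ => ?_
          have := bb_nonneg m ξ
          rw [← ENNReal.ofReal_mul this, ← ENNReal.ofReal_add (by positivity) (by positivity)]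
          apply ENNReal.ofReal_le_ofReal
          have h1 := mul_le_mul_of_nonneg_right (hK ξ) (sq_nonneg ‖F ξ‖)
          have h2 : K * ((1 + ‖ξ‖^2)^(2*m))⁻¹ * ‖F ξ‖^2 ≤ K * ((1 + ‖ξ‖^2)^(2*m))⁻¹ * 4 :=
            mul_le_mul_of_nonneg_left (hF2 ξ) (by positivity)
          linarith
      _ = (∫⁻ ξ, ENNReal.ofReal (bb m ξ) * ENNReal.ofReal (‖F ξ‖^2)) + ENNReal.ofReal (4*(K*J)) := by
          rw [lintegral_add_right _ (by fun_prop)]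
          congr 1
          rw [← ofReal_integral_eq_lintegral_ofReal (hJ.const_mul _) (Eventually.of_forall fun ξ => by positivity)]
          rw [integral_const_mul, mul_assoc]
      _ ≤ _ := by
          rw [hQ, ENNReal.ofReal_add hQ1 (by positivity)]
          gcongr
          exact bb_pair m hm hA hE hpos hfin hE' hpos' hfin' hEA hEA'
  have hcont : Continuous (fun ξ => (cw m L d ξ)⁻¹ * ‖F ξ‖^2) :=
    ((cw_continuous m L d).inv₀ fun ξ => (hcpos ξ).ne').mul (hcF.norm.pow 2)
  have hnn : ∀ ξ : VV (2*m), 0 ≤ (cw m L d ξ)⁻¹ * ‖F ξ‖^2 := fun ξ => by have := hcpos ξ; positivity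
  have hInt0 : Integrable (fun ξ => (cw m L d ξ)⁻¹ * ‖F ξ‖^2) := by
    refine ⟨hcont.aestronglyMeasurable, ?_⟩
    rw [hasFiniteIntegral_iff_ofReal (Eventually.of_forall hnn)]
    exact hlin.trans_lt ENNReal.ofReal_lt_top
  have hIntQ : ∫ ξ, (cw m L d ξ)⁻¹ * ‖F ξ‖^2 ≤ Q := by
    rw [← ofReal_integral_eq_lintegral_ofReal hInt0 (Eventually.of_forall hnn)] at hlin
    exact (ENNReal.ofReal_le_ofReal_iff hQ0).1 hlin
  set S := s + s' with hS
  have hS0 : 0 ≤ S := by positivity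
  have hmulint : ∀ f : VV (2*m) → ℝ, Integrable f → Integrable (fun ξ => (starRingEnd ℂ) (FT f ξ) * FT u ξ) := by
    intro f hf
    refine hu.FT_integrable.bdd_mul (c := ∫ x, |f x|) ?_ ?_
    · exact (Complex.continuous_conj.comp (FT_continuous hf)).aestronglyMeasurable
    · exact Eventually.of_forall fun ξ => by simpa using FT_norm_le f ξ
  have hSle : S ≤ ∫ ξ, ‖F ξ‖ * ‖FT u ξ‖ := by
    have h1 := ni_lower hu hE hpos hfin hsu
    have h2 := ni_lower hu hE' hpos' hfin' hsu'
    calc S ≤ (∫ ξ, ((starRingEnd ℂ) (FT (ni E) ξ) * FT u ξ + (starRingEnd ℂ) (FT (ni E') ξ) * FT u ξ)).re := by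
          rw [integral_add (hmulint _ hiE) (hmulint _ hiE'), Complex.add_re]; linarith
      _ ≤ ‖∫ ξ, ((starRingEnd ℂ) (FT (ni E) ξ) * FT u ξ + (starRingEnd ℂ) (FT (ni E') ξ) * FT u ξ)‖ := Complex.re_le_norm _
      _ ≤ ∫ ξ, ‖(starRingEnd ℂ) (FT (ni E) ξ) * FT u ξ + (starRingEnd ℂ) (FT (ni E') ξ) * FT u ξ‖ := norm_integral_le_integral_norm _
      _ = _ := by
          congr 1; ext ξ
          rw [← add_mul, ← map_add, norm_mul, RCLike.norm_conj]
  have hcu := hu.cw_integrable m L d hL hd.le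
  have hmain : 2 * S * ∫ ξ, ‖F ξ‖ * ‖FT u ξ‖ ≤ S^2 * 1 + Q := by
    calc _ = ∫ ξ, 2 * S * (‖F ξ‖ * ‖FT u ξ‖) := by rw [integral_const_mul]
      _ ≤ ∫ ξ, (S^2 * (cw m L d ξ * ‖FT u ξ‖^2) + (cw m L d ξ)⁻¹ * ‖F ξ‖^2) := by
          refine integral_mono_of_nonneg (Eventually.of_forall fun ξ => by positivity)
            ((hcu.const_mul _).add hInt0) (Eventually.of_forall fun ξ => ?_)
          have hc := hcpos ξ
          simp only
          set c := cw m L d ξ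
          have : S^2 * (c * ‖FT u ξ‖^2) + c⁻¹ * ‖F ξ‖^2 - 2 * S * (‖F ξ‖ * ‖FT u ξ‖)
            = c⁻¹ * (S * c * ‖FT u ξ‖ - ‖F ξ‖)^2 := by field_simp; ring
          have : 0 ≤ c⁻¹ * (S * c * ‖FT u ξ‖ - ‖F ξ‖)^2 := by positivity
          linarith
      _ = S^2 * (∫ ξ, cw m L d ξ * ‖FT u ξ‖^2) + ∫ ξ, (cw m L d ξ)⁻¹ * ‖F ξ‖^2 := by
          rw [integral_add (hcu.const_mul _) hInt0, integral_const_mul]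
      _ ≤ _ := by gcongr
  have hSQ : S^2 ≤ Q := by nlinarith
  have := mul_le_mul_of_nonneg_left hSQ hb.le
  refine this.trans (le_of_eq ?_)
  rw [hQ]; field_simp; ring

lemma garsia_card (C j : ℕ) (T : Set ℕ)
    (hT : ∀ n₁ ∈ T, ∀ n₂ ∈ T, n₁ ≤ n₂ → n₁ * n₂ ≤ (n₁ + 2 * (j + C))^2) :
    ∃ s : Finset ℕ, T ⊆ s ∧ s.card ≤ 9 * (j + C) + 2 := by
  classical
  set N := j + C with hN
  by_cases hne : ∃ n, n ∈ T ∧ N + 1 ≤ n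
  · set n₁ := Nat.find hne with hn1
    obtain ⟨h1, h2⟩ := Nat.find_spec hne
    rw [← hn1] at h1 h2
    refine ⟨Finset.range (N+1) ∪ Finset.Icc n₁ (n₁ + 8*N), ?_, ?_⟩
    · intro n hn
      simp only [Finset.coe_union, Set.mem_union, Finset.mem_coe, Finset.mem_range, Finset.mem_Icc]
      by_cases h : n < N + 1
      · exact Or.inl h
      · right
        have hle : n₁ ≤ n := Nat.find_min' hne ⟨hn, by omega⟩
        refine ⟨hle, ?_⟩
        have := hT n₁ h1 n hn hle
        by_contra hc
        push Not at hc
        have h3 : n₁ * (n₁ + 8*N + 1) ≤ n₁ * n := Nat.mul_le_mul_left _ hc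
        nlinarith
    · refine (Finset.card_union_le _ _).trans ?_
      simp only [Finset.card_range, Nat.card_Icc]
      omega
  · push Not at hne
    refine ⟨Finset.range (N+1), fun n hn => ?_, ?_⟩
    · simp only [Finset.coe_range, Set.mem_Iio]; exact hne n hn
    · simp only [Finset.card_range]; omega

lemma garsia_sum (C : ℕ) : ∃ B : ℝ≥0∞, B < ⊤ ∧ ∀ a : ℕ → ℝ, (∀ n, 0 ≤ a n) →
    (∀ n, a n ≤ Real.exp C) →
    (∀ n₁ n₂ : ℕ, n₁ ≤ n₂ → 0 < a n₁ → 0 < a n₂ →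
      (√(n₁:ℝ) + √(n₂:ℝ))^2 ≤ 3 * (n₁ - Real.log (a n₁)) + (n₂ - Real.log (a n₂)) + 4 * C) →
    ∑' n, ENNReal.ofReal (a n) ≤ B := by
  classical
  set w : ℕ → ℝ := fun j => Real.exp (C + 1 - j) with hw
  refine ⟨∑' j : ℕ, ENNReal.ofReal (((9*(j+C)+2 : ℕ) : ℝ) * w j), ?_, ?_⟩
  · have h1 := Real.summable_pow_mul_exp_neg_nat_mul 1 (r := 1) one_pos
    have h0 := Real.summable_pow_mul_exp_neg_nat_mul 0 (r := 1) one_pos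
    have : Summable (fun j : ℕ => ((9*(j+C)+2 : ℕ) : ℝ) * w j) := by
      have := ((h1.mul_left 9).add (h0.mul_left (9*(C:ℝ)+2))).mul_left (Real.exp ((C:ℝ)+1))
      refine this.congr fun j => ?_
      simp only [hw]
      rw [show ((C:ℝ)+1-j) = (C+1) + (-1*j) by ring, Real.exp_add ((C:ℝ)+1)]
      push_cast; ring
    rw [← ENNReal.ofReal_tsum_of_nonneg (fun j => by positivity) this]
    exact ENNReal.ofReal_lt_top
  intro a ha0 haC hpair
  calc ∑' n, ENNReal.ofReal (a n)
      ≤ ∑' n, ∑' j : ℕ, (if 0 < a n ∧ Real.exp (-(j:ℝ)) ≤ a n then ENNReal.ofReal (w j) else 0) := by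
        refine ENNReal.tsum_le_tsum fun n => ?_
        rcases (ha0 n).eq_or_lt with h | h
        · rw [← h]; simp
        · set j := ⌈-Real.log (a n)⌉₊ with hj
          have hj1 : -Real.log (a n) ≤ j := Nat.le_ceil _
          refine le_trans ?_ (ENNReal.le_tsum j)
          have h2 : Real.exp (-(j:ℝ)) ≤ a n := by
            rw [← Real.le_log_iff_exp_le h]; linarith
          rw [if_pos ⟨h, h2⟩]
          apply ENNReal.ofReal_le_ofReal
          rcases le_or_gt (-Real.log (a n)) 0 with hc | hc
          · have : j = 0 := by rw [hj]; exact Nat.ceil_eq_zero.2 hc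
            simp only [hw, this]
            refine (haC n).trans (Real.exp_le_exp.2 ?_)
            push_cast; linarith
          · have h3 : (j:ℝ) < -Real.log (a n) + 1 := Nat.ceil_lt_add_one hc.le
            rw [← Real.log_le_iff_le_exp h]
            have : (0:ℝ) ≤ C := by positivity
            linarith
    _ = ∑' j : ℕ, ∑' n, (if 0 < a n ∧ Real.exp (-(j:ℝ)) ≤ a n then ENNReal.ofReal (w j) else 0) :=
        ENNReal.tsum_comm
    _ ≤ _ := by
        refine ENNReal.tsum_le_tsum fun j => ?_
        obtain ⟨s, hs, hcard⟩ := garsia_card C j {n | 0 < a n ∧ Real.exp (-(j:ℝ)) ≤ a n} (by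
          rintro n₁ ⟨p1, q1⟩ n₂ ⟨p2, q2⟩ hle
          have := hpair n₁ n₂ hle p1 p2
          rw [← Real.le_log_iff_exp_le p1] at q1
          rw [← Real.le_log_iff_exp_le p2] at q2
          have s1 := Real.sq_sqrt (Nat.cast_nonneg (α := ℝ) n₁)
          have s2 := Real.sq_sqrt (Nat.cast_nonneg (α := ℝ) n₂)
          have h3 : √(n₁:ℝ) * √(n₂:ℝ) ≤ n₁ + 2 * (j + C) := by nlinarith
          have h4 : (√(n₁:ℝ) * √(n₂:ℝ))^2 ≤ (n₁ + 2 * (j + C))^2 :=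
            pow_le_pow_left₀ (by positivity) h3 2
          rw [mul_pow, s1, s2] at h4
          exact_mod_cast h4)
        calc _ ≤ ∑' n, (if n ∈ s then ENNReal.ofReal (w j) else 0) := by
              refine ENNReal.tsum_le_tsum fun n => ?_
              split_ifs with h1 h2
              · exact le_rfl
              · exact absurd (hs h1) h2
              · simp
              · simp
          _ = ∑ n ∈ s, ENNReal.ofReal (w j) := by
              rw [tsum_eq_sum (s := s)]
              · exact Finset.sum_congr rfl fun n hn => by simp [hn]
              · intro n hn; simp [hn]
          _ ≤ _ := by
              rw [Finset.sum_const, nsmul_eq_mul, ENNReal.ofReal_mul (by positivity), ENNReal.ofReal_natCast]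
              gcongr

lemma garsia_plus (m : ℕ) (hm : 1 ≤ m) {A L d : ℝ} (hA : 1 ≤ A) (hL : 0 ≤ L) (hd : 0 < d) :
    ∃ B : ℝ≥0∞, B < ⊤ ∧ ∀ Ω : Set (VV (2*m)), MeasurableSet Ω → volume Ω ≠ ⊤ → volume.real Ω ≤ A →
    ∀ u : VV (2*m) → ℝ, Cc u → ∫ ξ, cw m L d ξ * ‖FT u ξ‖^2 ≤ 1 →
    ∫⁻ x in Ω ∩ {x | 0 ≤ u x}, ENNReal.ofReal (Real.exp (betaStar m * (u x)^2)) ≤ B := by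
  obtain ⟨C', hC0, hC'⟩ := pair_bound m hm hA hL hd
  set C := ⌈C'⌉₊ with hC
  have hCC : C' ≤ C := Nat.le_ceil _
  obtain ⟨B, hB, hBs⟩ := garsia_sum C
  have hb := betaStar_pos m
  refine ⟨ENNReal.ofReal (Real.exp 1) * B, ENNReal.mul_lt_top ENNReal.ofReal_lt_top hB, ?_⟩
  intro Ω hΩ hfin hΩA u hu hu1
  have huc := hu.1.continuous
  set E : ℕ → Set (VV (2*m)) := fun n => Ω ∩ {x | 0 ≤ u x ∧ (n:ℝ) ≤ betaStar m * (u x)^2} with hE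
  have hEm : ∀ n, MeasurableSet (E n) := by
    intro n
    refine hΩ.inter (MeasurableSet.inter ?_ ?_)
    · exact (isClosed_le continuous_const huc).measurableSet
    · exact (isClosed_le continuous_const (continuous_const.mul (huc.pow 2))).measurableSet
  have hEf : ∀ n, volume (E n) ≠ ⊤ := fun n => measure_ne_top_of_subset Set.inter_subset_left hfin
  have hEA : ∀ n, volume.real (E n) ≤ A := fun n =>
    (measureReal_mono Set.inter_subset_left hfin).trans hΩA
  have hEs : ∀ n : ℕ, ∀ x ∈ E n, √((n:ℝ) / betaStar m) ≤ u x := by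
    rintro n x ⟨_, h1, h2⟩
    apply Real.sqrt_le_iff.2 ⟨h1, ?_⟩
    rw [div_le_iff₀ hb]; linarith
  have hpair : ∀ n₁ n₂ : ℕ, 0 < volume.real (E n₁) → 0 < volume.real (E n₂) →
      (√(n₁:ℝ) + √(n₂:ℝ))^2 ≤ 3 * (- Real.log (volume.real (E n₁))) + (- Real.log (volume.real (E n₂))) + 4 * C := by
    intro n₁ n₂ h1 h2
    have := hC' u hu hu1 (E n₁) (E n₂) (hEm _) h1 (hEf _) (hEA _) (hEm _) h2 (hEf _) (hEA _)
      _ _ (Real.sqrt_nonneg _) (Real.sqrt_nonneg _) (hEs n₁) (hEs n₂)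
    have e : betaStar m * (√((n₁:ℝ) / betaStar m) + √((n₂:ℝ) / betaStar m))^2 = (√(n₁:ℝ) + √(n₂:ℝ))^2 := by
      rw [Real.sqrt_div (by positivity), Real.sqrt_div (by positivity), ← add_div, div_pow, Real.sq_sqrt hb.le]
      field_simp
    rw [e] at this
    linarith
  set a : ℕ → ℝ := fun n => Real.exp n * volume.real (E n) with ha
  have hlog : ∀ n, 0 < a n → 0 < volume.real (E n) ∧ Real.log (a n) = n + Real.log (volume.real (E n)) := by
    intro n hn
    have h1 : 0 < volume.real (E n) := pos_of_mul_pos_right hn (Real.exp_pos _).le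
    exact ⟨h1, by rw [ha]; simp only; rw [Real.log_mul (Real.exp_pos _).ne' h1.ne', Real.log_exp]⟩
  have ha0 : ∀ n, 0 ≤ a n := fun n => by positivity
  have hsum := hBs a ha0 (by
      intro n
      rcases (ha0 n).eq_or_lt with h | h
      · rw [← h]; positivity
      · obtain ⟨h1, h2⟩ := hlog n h
        have := hpair n n h1 h1
        rw [← Real.log_le_iff_le_exp h, h2]
        have s1 := Real.sq_sqrt (Nat.cast_nonneg (α := ℝ) n)
        nlinarith) (by
      intro n₁ n₂ _ p1 p2
      obtain ⟨h1, h2⟩ := hlog _ p1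
      obtain ⟨h3, h4⟩ := hlog _ p2
      have := hpair n₁ n₂ h1 h3
      rw [h2, h4]; linarith)
  calc _ ≤ ∫⁻ x, ∑' n : ℕ, (E n).indicator (fun _ => ENNReal.ofReal (Real.exp (n+1))) x := by
        rw [← lintegral_indicator (hΩ.inter (isClosed_le continuous_const huc).measurableSet)]
        refine lintegral_mono fun x => ?_
        by_cases hx : x ∈ Ω ∩ {x | 0 ≤ u x}
        · rw [Set.indicator_of_mem hx]
          set n := ⌊betaStar m * (u x)^2⌋₊ with hn
          refine le_trans ?_ (ENNReal.le_tsum n)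
          have hxE : x ∈ E n := ⟨hx.1, hx.2, Nat.floor_le (by positivity)⟩
          rw [Set.indicator_of_mem hxE]
          apply ENNReal.ofReal_le_ofReal (Real.exp_le_exp.2 (Nat.lt_floor_add_one _).le)
        · rw [Set.indicator_of_notMem hx]; simp
    _ = ∑' n : ℕ, ENNReal.ofReal (Real.exp 1) * ENNReal.ofReal (a n) := by
        rw [lintegral_tsum]
        · congr 1; ext n
          rw [lintegral_indicator (hEm n), setLIntegral_const, ← ENNReal.ofReal_mul (by positivity)]
          rw [← ofReal_measureReal (hEf n), ← ENNReal.ofReal_mul (by positivity)]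
          congr 1
          rw [ha]; simp only; rw [Real.exp_add]; ring
        · intro n
          exact (measurable_const.indicator (hEm n)).aemeasurable
    _ ≤ _ := by
        rw [ENNReal.tsum_mul_left]
        gcongr

lemma Cc.neg {n : ℕ} {u : VV n → ℝ} (h : Cc u) : Cc (fun x => - u x) :=
  ⟨h.1.neg, h.2.comp_left (g := fun r : ℝ => -r) (by simp)⟩

lemma FT_neg {n : ℕ} (u : VV n → ℝ) (ξ : VV n) : FT (fun x => - u x) ξ = - FT u ξ := by
  simp only [FT, Real.fourier_eq, Complex.ofReal_neg, smul_neg, integral_neg]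

lemma garsia (m : ℕ) (hm : 1 ≤ m) {L d : ℝ} (hL : 0 ≤ L) (hd : 0 < d)
    (Ω : Set (VV (2*m))) (hΩ : MeasurableSet Ω) (hfin : volume Ω ≠ ⊤) :
    ∃ B : ℝ≥0∞, B < ⊤ ∧ ∀ u : VV (2*m) → ℝ, Cc u → ∫ ξ, cw m L d ξ * ‖FT u ξ‖^2 ≤ 1 →
    ∫⁻ x in Ω, ENNReal.ofReal (Real.exp (betaStar m * (u x)^2)) ≤ B := by
  obtain ⟨B, hB, h⟩ := garsia_plus m hm (A := max 1 (volume.real Ω)) (le_max_left _ _) hL hd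
  refine ⟨B + B, ENNReal.add_lt_top.2 ⟨hB, hB⟩, fun u hu hu1 => ?_⟩
  have h1 := h Ω hΩ hfin (le_max_right _ _) u hu hu1
  have h2 := h Ω hΩ hfin (le_max_right _ _) _ hu.neg (by simpa only [FT_neg, norm_neg] using hu1)
  simp only [neg_sq] at h2
  have hsub : Ω ⊆ (Ω ∩ {x | 0 ≤ u x}) ∪ (Ω ∩ {x | 0 ≤ - u x}) := by
    intro x hx
    rcases le_total 0 (u x) with h0 | h0
    · exact Or.inl ⟨hx, h0⟩
    · exact Or.inr ⟨hx, by simpa using h0⟩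
  refine (lintegral_mono_set hsub).trans ((lintegral_union_le _ _ _).trans (add_le_add h1 h2))

lemma weak_seq {H : Type*} [NormedAddCommGroup H] [InnerProductSpace ℝ H] [CompleteSpace H]
    [TopologicalSpace.SeparableSpace H] (x : ℕ → H) (hx : ∀ k, ‖x k‖ ≤ 1) :
    ∃ (y : H) (ψ : ℕ → ℕ), StrictMono ψ ∧ ∀ v : H, Tendsto (fun k => inner ℝ (x (ψ k)) v) atTop (𝓝 (inner ℝ y v)) := by
  have hs := WeakDual.isSeqCompact_closedBall ℝ H (0 : StrongDual ℝ H) 1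
  obtain ⟨l, -, ψ, hψ, hl⟩ := hs (x := fun k => StrongDual.toWeakDual (InnerProductSpace.toDual ℝ H (x k)))
    (fun k => by
      simp only [Set.mem_preimage, Metric.mem_closedBall, dist_zero_right]
      refine le_trans (le_of_eq ?_) (hx k)
      exact (InnerProductSpace.toDual ℝ H).norm_map (x k))
  refine ⟨(InnerProductSpace.toDual ℝ H).symm (WeakDual.toStrongDual l), ψ, hψ, fun v => ?_⟩
  have := ((WeakDual.eval_continuous (𝕜 := ℝ) (E := H) v).tendsto l).comp hl
  rw [InnerProductSpace.toDual_symm_apply]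
  exact this

lemma FT_cos_sin {n : ℕ} {f : VV n → ℝ} (hf : Integrable f) (ξ : VV n) :
    FT f ξ = ((∫ x, f x * Real.cos (2 * π * inner ℝ x ξ) : ℝ) : ℂ)
      - Complex.I * ((∫ x, f x * Real.sin (2 * π * inner ℝ x ξ) : ℝ) : ℂ) := by
  have i1 : Integrable (fun x => f x * Real.cos (2 * π * inner ℝ x ξ)) :=
    hf.mul_bdd (c := 1) (by fun_prop) (Eventually.of_forall fun x => by simpa using Real.abs_cos_le_one _)
  have i2 : Integrable (fun x => f x * Real.sin (2 * π * inner ℝ x ξ)) :=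
    hf.mul_bdd (c := 1) (by fun_prop) (Eventually.of_forall fun x => by simpa using Real.abs_sin_le_one _)
  simp only [FT, Real.fourier_eq']
  rw [← integral_complex_ofReal, ← integral_complex_ofReal, ← integral_const_mul, ← integral_sub i1.ofReal (i2.ofReal.const_mul _)]
  congr 1; ext x
  rw [smul_eq_mul, show ((-2 * π * inner ℝ x ξ : ℝ):ℂ) = -((2 * π * inner ℝ x ξ : ℝ):ℂ) by push_cast; ring,
    Complex.exp_mul_I, Complex.cos_neg, Complex.sin_neg]
  push_cast; ring

lemma weak_limit {n : ℕ} {Ω : Set (VV n)} (hΩ : MeasurableSet Ω) (hfin : volume Ω ≠ ⊤)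
    (u : ℕ → VV n → ℝ) (hu : ∀ k, Cc (u k)) (h0 : ∀ k, ∀ x ∉ Ω, u k x = 0)
    (h1 : ∀ k, ∫ x, (u k x)^2 ≤ 1) :
    ∃ (φ : VV n → ℝ) (ψ : ℕ → ℕ), StrictMono ψ ∧ Integrable φ ∧ (∀ x ∉ Ω, φ x = 0) ∧
      ∀ ξ, Tendsto (fun k => FT (u (ψ k)) ξ) atTop (𝓝 (FT φ ξ)) := by
  have : Fact ((2:ℝ≥0∞) ≠ ⊤) := ⟨by norm_num⟩
  have : SecondCountableTopology (Lp ℝ 2 (volume : Measure (VV n))) := inferInstance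
  have hmem : ∀ k, MemLp (u k) 2 volume := fun k =>
    (memLp_two_iff_integrable_sq (hu k).1.continuous.aestronglyMeasurable).2 (hu k).integrable_sq
  obtain ⟨y, ψ, hψ, hw⟩ := weak_seq (H := Lp ℝ 2 (volume : Measure (VV n))) (fun k => (hmem k).toLp) (by
    intro k
    have : ‖(hmem k).toLp‖^2 ≤ 1 := by
      rw [← real_inner_self_eq_norm_sq, L2.inner_def]
      refine le_trans (le_of_eq (integral_congr_ae ?_)) (h1 k)
      filter_upwards [(hmem k).coeFn_toLp] with x hx
      simp [hx, sq]
    nlinarith [norm_nonneg (hmem k).toLp])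
  set φ : VV n → ℝ := Ω.indicator y with hφ
  have hy : MemLp y 2 volume := Lp.memLp y
  have hφi : Integrable φ := by
    rw [hφ, integrable_indicator_iff hΩ]
    have : IsFiniteMeasure (volume.restrict Ω) := ⟨by simpa using hfin.lt_top⟩
    exact (hy.restrict Ω).integrable (by norm_num)
  refine ⟨φ, ψ, hψ, hφi, fun x hx => Set.indicator_of_notMem hx _, fun ξ => ?_⟩
  have key : ∀ g : VV n → ℝ, Continuous g → (∀ x, |g x| ≤ 1) →
      Tendsto (fun k => ∫ x, u (ψ k) x * g x) atTop (𝓝 (∫ x, φ x * g x)) := by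
    intro g hg hg1
    have hgm : MemLp (Ω.indicator g) 2 volume := by
      have : IsFiniteMeasure (volume.restrict Ω) := ⟨by simpa using hfin.lt_top⟩
      rw [memLp_indicator_iff_restrict hΩ]
      exact MemLp.of_bound hg.aestronglyMeasurable 1 (Eventually.of_forall fun x => by simpa using hg1 x)
    have := hw hgm.toLp
    simp only [L2.inner_def] at this
    convert this using 1
    · ext k
      refine integral_congr_ae ?_
      filter_upwards [(hmem (ψ k)).coeFn_toLp, hgm.coeFn_toLp] with x e1 e2
      simp only [e1, e2, RCLike.inner_apply, conj_trivial]
      by_cases hx : x ∈ Ω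
      · simp [hx, mul_comm]
      · simp [hx, h0 _ x hx]
    · congr 1
      refine integral_congr_ae ?_
      filter_upwards [hgm.coeFn_toLp] with x e2
      simp only [e2, RCLike.inner_apply, conj_trivial, hφ]
      by_cases hx : x ∈ Ω
      · simp [hx, mul_comm]
      · simp [hx]
  rw [FT_cos_sin hφi]
  simp only [fun k => FT_cos_sin (hu (ψ k)).integrable ξ]
  have k1 := key (fun x => Real.cos (2 * π * inner ℝ x ξ)) (by fun_prop) (fun x => Real.abs_cos_le_one _)
  have k2 := key (fun x => Real.sin (2 * π * inner ℝ x ξ)) (by fun_prop) (fun x => Real.abs_sin_le_one _)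
  exact ((Complex.continuous_ofReal.tendsto _).comp k1).sub
    (((Complex.continuous_ofReal.tendsto _).comp k2).const_mul _)

lemma norm_sq_le_zz {n : ℕ} (ξ : VV n) : ‖ξ‖^2 ≤ zz ξ := by
  unfold zz
  rw [mul_pow]
  have : 1 ≤ (2*π)^2 := by nlinarith [Real.pi_gt_three]
  nlinarith [sq_nonneg ‖ξ‖]

lemma Cc.FT_sq_integrable {n : ℕ} {u : VV n → ℝ} (h : Cc u) : Integrable (fun ξ => ‖FT u ξ‖^2) := by
  have h0 := (h.integrable_zz 0)
  simpa only [pow_zero, one_mul] using h0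

lemma Cc.min_integrable {n : ℕ} {u : VV n → ℝ} (h : Cc u) (m : ℕ) (L : ℝ) (hL : 0 ≤ L) :
    Integrable (fun ξ => min (zz ξ ^ m) L * ‖FT u ξ‖^2) := by
  refine (h.integrable_zz m).mono' ?_ ?_
  · have := zz_continuous (n := n)
    have := FT_continuous h.integrable
    exact Continuous.aestronglyMeasurable (by fun_prop)
  · refine Eventually.of_forall fun ξ => ?_
    have h0 : 0 ≤ min (zz ξ ^ m) L := le_min (pow_nonneg (zz_nonneg ξ) _) hL
    rw [Real.norm_of_nonneg (by positivity)]
    exact mul_le_mul_of_nonneg_right (min_le_left _ _) (by positivity)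

lemma fatou_real {X : Type*} [MeasurableSpace X] {μ : Measure X} (F : ℕ → X → ℝ) (G : X → ℝ)
    (hF0 : ∀ k x, 0 ≤ F k x) (hG0 : ∀ x, 0 ≤ G x) (hFi : ∀ k, Integrable (F k) μ)
    (hGm : AEStronglyMeasurable G μ) (B : ℝ) (hB : 0 ≤ B) (hFB : ∀ k, ∫ x, F k x ∂μ ≤ B)
    (hlim : ∀ x, Tendsto (fun k => F k x) atTop (𝓝 (G x))) :
    Integrable G μ ∧ ∫ x, G x ∂μ ≤ B := by
  have h : ∫⁻ x, ENNReal.ofReal (G x) ∂μ ≤ ENNReal.ofReal B := by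
    calc _ = ∫⁻ x, liminf (fun k => ENNReal.ofReal (F k x)) atTop ∂μ := by
          congr 1; ext x
          exact (((ENNReal.continuous_ofReal.tendsto _).comp (hlim x)).liminf_eq).symm
      _ ≤ liminf (fun k => ∫⁻ x, ENNReal.ofReal (F k x) ∂μ) atTop :=
          lintegral_liminf_le' fun k => (hFi k).aestronglyMeasurable.aemeasurable.ennreal_ofReal
      _ ≤ _ := by
          refine (liminf_le_liminf (v := fun _ => ENNReal.ofReal B) (Eventually.of_forall fun k => ?_)).trans (le_of_eq (liminf_const _))
          rw [← ofReal_integral_eq_lintegral_ofReal (hFi k) (Eventually.of_forall (hF0 k))]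
          exact ENNReal.ofReal_le_ofReal (hFB k)
  have hi : Integrable G μ := by
    refine ⟨hGm, ?_⟩
    rw [hasFiniteIntegral_iff_ofReal (Eventually.of_forall hG0)]
    exact h.trans_lt ENNReal.ofReal_lt_top
  refine ⟨hi, ?_⟩
  rw [← ofReal_integral_eq_lintegral_ofReal hi (Eventually.of_forall hG0)] at h
  exact (ENNReal.ofReal_le_ofReal_iff hB).1 h

lemma limit_props (m : ℕ) (hm : 1 ≤ m) {n : ℕ} {Ω : Set (VV n)} (hΩ : MeasurableSet Ω) (hfin : volume Ω ≠ ⊤)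
    (γ : ℝ) (u : ℕ → VV n → ℝ) (hu : ∀ k, Cc (u k)) (h0 : ∀ k, ∀ x ∉ Ω, u k x = 0)
    (h1 : ∀ k, ∫ ξ, ‖FT (u k) ξ‖^2 = 1) (hγ : ∀ k : ℕ, ∫ ξ, min (zz ξ ^ m) k * ‖FT (u k) ξ‖^2 ≤ γ) :
    ∃ φ : VV n → ℝ, Integrable φ ∧ (∀ x ∉ Ω, φ x = 0) ∧ Integrable (fun ξ => ‖FT φ ξ‖^2) ∧
      Integrable (fun ξ => zz ξ ^ m * ‖FT φ ξ‖^2) ∧ ∫ ξ, zz ξ ^ m * ‖FT φ ξ‖^2 ≤ γ ∧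
      1 ≤ ∫ ξ, ‖FT φ ξ‖^2 := by
  obtain ⟨φ, ψ, hψ, hφi, hφ0, hlim⟩ := weak_limit hΩ hfin u hu h0 (fun k => by
    rw [← (hu k).plancherel, h1 k])
  have hφc := FT_continuous hφi
  have hzc := zz_continuous (n := n)
  have hz0 : ∀ k : ℕ, ∀ ξ : VV n, 0 ≤ min (zz ξ ^ m) (k:ℝ) := fun k ξ =>
    le_min (pow_nonneg (zz_nonneg ξ) _) (by positivity)
  have hγ0 : 0 ≤ γ := le_trans (integral_nonneg fun ξ => mul_nonneg (hz0 0 ξ) (by positivity)) (hγ 0)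
  have hbd : ∀ k ξ, ‖FT (u k) ξ‖ ≤ volume.real Ω + 1 := by
    intro k ξ
    refine (FT_norm_le _ _).trans ?_
    have i1 : Integrable (Ω.indicator (fun _ => (1:ℝ))) := by
      rw [integrable_indicator_iff hΩ]; exact integrableOn_const hfin
    calc _ ≤ ∫ x, (Ω.indicator (fun _ => (1:ℝ)) x + (u k x)^2) := by
          refine integral_mono (hu k).integrable.abs (i1.add (hu k).integrable_sq) fun x => ?_
          by_cases hx : x ∈ Ω
          · simp only [Set.indicator_of_mem hx]
            nlinarith [sq_abs (u k x), sq_nonneg (|u k x| - 1)]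
          · simp [hx, h0 k x hx]
      _ = _ := by
          rw [integral_add i1 (hu k).integrable_sq, integral_indicator hΩ, ← (hu k).plancherel, h1 k]
          simp [Measure.real]
  have f1 := fatou_real (μ := volume) (fun k ξ => ‖FT (u (ψ k)) ξ‖^2) (fun ξ => ‖FT φ ξ‖^2)
    (fun _ _ => by positivity) (fun _ => by positivity) (fun k => (hu _).FT_sq_integrable)
    (hφc.norm.pow 2).aestronglyMeasurable 1 zero_le_one (fun k => (h1 _).le)
    (fun ξ => (hlim ξ).norm.pow 2)
  have f2 := fatou_real (μ := volume) (fun k ξ => min (zz ξ ^ m) (ψ k : ℝ) * ‖FT (u (ψ k)) ξ‖^2)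
    (fun ξ => zz ξ ^ m * ‖FT φ ξ‖^2)
    (fun k ξ => mul_nonneg (hz0 _ ξ) (by positivity))
    (fun ξ => by have := zz_nonneg ξ; positivity) (fun k => (hu _).min_integrable m _ (by positivity))
    ((hzc.pow m).mul (hφc.norm.pow 2)).aestronglyMeasurable γ hγ0 (fun k => hγ _)
    (fun ξ => by
      refine Tendsto.mul ?_ ((hlim ξ).norm.pow 2)
      refine tendsto_const_nhds.congr' ?_
      obtain ⟨N, hN⟩ := exists_nat_ge (zz ξ ^ m)
      filter_upwards [eventually_ge_atTop N] with k hk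
      rw [min_eq_left]
      refine hN.trans ?_
      exact_mod_cast hk.trans (hψ.id_le k))
  refine ⟨φ, hφi, hφ0, f1.1, f2.1, f2.2, ?_⟩
  have key : ∀ R : ℝ, 1 ≤ R → 1 - γ / R ≤ ∫ ξ, ‖FT φ ξ‖^2 := by
    intro R hR
    have hR0 : 0 < R := by linarith
    set D : Set (VV n) := {ξ | zz ξ ≤ R} with hD
    have hDm : MeasurableSet D := (isClosed_le hzc continuous_const).measurableSet
    have hDf : volume D ≠ ⊤ := by
      refine measure_ne_top_of_subset (s := Metric.closedBall (0 : VV n) R) ?_ (measure_closedBall_lt_top (μ := volume)).ne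
      intro ξ hξ
      have h3 : zz ξ ≤ R := hξ
      have h4 := norm_sq_le_zz ξ
      rw [mem_closedBall_zero_iff]
      have h5 : ‖ξ‖^2 ≤ R^2 := by nlinarith
      exact (abs_le_of_sq_le_sq' h5 hR0.le).2
    have hdct : Tendsto (fun k => ∫ ξ in D, ‖FT (u (ψ k)) ξ‖^2) atTop (𝓝 (∫ ξ in D, ‖FT φ ξ‖^2)) := by
      have : IsFiniteMeasure (volume.restrict D) := ⟨by simpa using hDf.lt_top⟩
      refine tendsto_integral_of_dominated_convergence (fun _ => (volume.real Ω + 1)^2) ?_ ?_ ?_ ?_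
      · exact fun k => (hu _).FT_sq_integrable.aestronglyMeasurable.restrict
      · exact integrable_const _
      · refine fun k => Eventually.of_forall fun ξ => ?_
        rw [Real.norm_of_nonneg (by positivity)]
        exact pow_le_pow_left₀ (norm_nonneg _) (hbd _ ξ) 2
      · exact Eventually.of_forall fun ξ => (hlim ξ).norm.pow 2
    have hlow : 1 - γ / R ≤ ∫ ξ in D, ‖FT φ ξ‖^2 := by
      refine ge_of_tendsto hdct ?_
      obtain ⟨N, hN⟩ := exists_nat_ge R
      filter_upwards [eventually_ge_atTop N] with k hk
      have hkR : R ≤ (ψ k : ℝ) := hN.trans (by exact_mod_cast hk.trans (hψ.id_le k))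
      have hi := (hu (ψ k)).FT_sq_integrable
      have hs := integral_add_compl hDm hi
      rw [h1] at hs
      have hi2 := (hu (ψ k)).min_integrable m (ψ k : ℝ) (by positivity)
      have ht : ∫ ξ in Dᶜ, ‖FT (u (ψ k)) ξ‖^2 ≤ γ / R := by
        calc _ ≤ ∫ ξ in Dᶜ, R⁻¹ * (min (zz ξ ^ m) (ψ k : ℝ) * ‖FT (u (ψ k)) ξ‖^2) := by
              refine setIntegral_mono_on hi.integrableOn (hi2.const_mul _).integrableOn hDm.compl fun ξ hξ => ?_
              have h3 : R < zz ξ := by simpa [hD] using hξ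
              have h4 : zz ξ ≤ zz ξ ^ m := le_self_pow₀ (by linarith) (by omega)
              have h5 : R ≤ min (zz ξ ^ m) (ψ k : ℝ) := le_min (by linarith) hkR
              rw [← mul_assoc]
              have : 1 ≤ R⁻¹ * min (zz ξ ^ m) (ψ k : ℝ) := by
                rw [inv_mul_eq_div, one_le_div hR0]; exact h5
              nlinarith [sq_nonneg ‖FT (u (ψ k)) ξ‖]
          _ ≤ ∫ ξ, R⁻¹ * (min (zz ξ ^ m) (ψ k : ℝ) * ‖FT (u (ψ k)) ξ‖^2) := by
              refine setIntegral_le_integral (hi2.const_mul _) (Eventually.of_forall fun ξ => ?_)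
              have := hz0 (ψ k) ξ
              simp only [Pi.zero_apply]
              positivity
          _ ≤ _ := by
              rw [integral_const_mul, div_eq_inv_mul]
              exact mul_le_mul_of_nonneg_left (hγ _) (by positivity)
      linarith
    refine hlow.trans (setIntegral_le_integral f1.1 (Eventually.of_forall fun ξ => ?_))
    simp only [Pi.zero_apply]; positivity
  have hl : Tendsto (fun R : ℝ => 1 - γ / R) atTop (𝓝 (1 - 0)) :=
    tendsto_const_nhds.sub (tendsto_const_nhds.div_atTop tendsto_id)
  rw [sub_zero] at hl
  exact le_of_tendsto hl (by filter_upwards [eventually_ge_atTop 1] with R hR using key R hR)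

lemma geom_local {n : ℕ} {Ω : Set (VV n)} (hΩo : IsOpen Ω) (f : VV n → ℝ) (hf : ContDiff ℝ (⊤ : ℕ∞) f)
    (hΩ : Ω = f ⁻¹' (Set.Iio 0)) (hfr : ∀ x ∈ frontier Ω, fderiv ℝ f x ≠ 0) (x0 : VV n) (hx0 : x0 ∈ closure Ω) :
    ∃ U : Set (VV n), IsOpen U ∧ x0 ∈ U ∧ ∃ e : VV n, ∃ c : ℝ, 0 < c ∧ ∃ s0 : ℝ, 0 < s0 ∧
      ∀ y ∈ closure Ω, y ∈ U → ∀ s, 0 < s → s < s0 → ∀ z ∈ Metric.closedBall (s • e) (c * s), y + z ∈ Ω := by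
  have hcl : ∀ y ∈ closure Ω, f y ≤ 0 := by
    intro y hy
    have : closure Ω ⊆ f ⁻¹' (Set.Iic 0) := by
      refine closure_minimal ?_ (isClosed_Iic.preimage hf.continuous)
      rw [hΩ]; intro z hz; have h1 : f z < 0 := hz; exact h1.le
    exact this hy
  by_cases hx : x0 ∈ Ω
  · obtain ⟨ε, hε, hb⟩ := Metric.isOpen_iff.1 hΩo x0 hx
    refine ⟨Metric.ball x0 (ε/2), Metric.isOpen_ball, Metric.mem_ball_self (by positivity), 0, 1, one_pos,
      ε/2, by positivity, ?_⟩
    intro y _ hyU s hs hs0 z hz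
    apply hb
    rw [smul_zero, mem_closedBall_zero_iff] at hz
    rw [Metric.mem_ball, dist_eq_norm] at hyU ⊢
    calc ‖y + z - x0‖ = ‖(y - x0) + z‖ := by congr 1; abel
      _ ≤ _ := norm_add_le _ _
      _ < ε := by linarith
  · have hfx : x0 ∈ frontier Ω := ⟨hx0, by rwa [hΩo.interior_eq]⟩
    have hd := hfr x0 hfx
    obtain ⟨v, hv⟩ : ∃ v, fderiv ℝ f x0 v ≠ 0 := by
      by_contra hc
      push Not at hc
      exact hd (ContinuousLinearMap.ext hc)
    set A := fderiv ℝ f x0 with hA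
    set e : VV n := (-(A v)⁻¹) • v with he
    have hAe : A e = -1 := by
      rw [he, map_smul, smul_eq_mul]; field_simp
    have hst : HasStrictFDerivAt f A x0 := hf.contDiffAt.hasStrictFDerivAt (by simp)
    -- constants
    set c : ℝ := 1 / (4 * (‖A‖ + 1)) with hc
    have hA0 := norm_nonneg A
    have hcpos : 0 < c := by positivity
    have hcA : ‖A‖ * c ≤ 1/4 := by
      rw [hc, mul_one_div, div_le_iff₀ (by positivity)]; linarith
    set κ : ℝ := 1 / (4 * (‖e‖ + c + 1)) with hκ
    have he0 := norm_nonneg e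
    have hκpos : 0 < κ := by positivity
    have hκe : κ * (‖e‖ + c) ≤ 1/4 := by
      rw [hκ, one_div_mul_eq_div, div_le_iff₀ (by positivity)]; linarith
    have hev := hst.isLittleO.def hκpos
    obtain ⟨ε, hε, hball⟩ := Metric.eventually_nhds_iff.1 hev
    refine ⟨Metric.ball x0 (ε/2), Metric.isOpen_ball, Metric.mem_ball_self (by positivity), e, c, hcpos,
      ε/2/(‖e‖ + c + 1), by positivity, ?_⟩
    intro y hy hyU s hs hs0 z hz
    rw [lt_div_iff₀ (by positivity)] at hs0
    rw [Metric.mem_closedBall, dist_eq_norm] at hz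
    have hzn : ‖z‖ ≤ (‖e‖ + c) * s := by
      calc ‖z‖ = ‖s • e + (z - s • e)‖ := by congr 1; abel
        _ ≤ ‖s • e‖ + ‖z - s • e‖ := norm_add_le _ _
        _ ≤ s * ‖e‖ + c * s := by rw [norm_smul, Real.norm_of_nonneg hs.le]; linarith
        _ = _ := by ring
    have hzε : ‖z‖ < ε/2 := by nlinarith
    rw [Metric.mem_ball] at hyU
    have hyz : dist (y + z) x0 < ε := by
      calc dist (y+z) x0 ≤ dist (y+z) y + dist y x0 := dist_triangle _ _ _
        _ < ε/2 + ε/2 := by rw [dist_eq_norm]; simp only [add_sub_cancel_left]; linarith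
        _ = ε := by ring
    have hk := @hball (y+z, y) (by
      rw [Prod.dist_eq]; exact max_lt hyz (by linarith))
    simp only [add_sub_cancel_left] at hk
    rw [Real.norm_eq_abs] at hk
    have hk2 := (abs_le.1 hk).2
    have hAz : A z ≤ -s + s/4 := by
      have h1 : A z = A (s • e) + A (z - s • e) := by rw [← map_add]; congr 1; abel
      have h2 : A (z - s • e) ≤ ‖A‖ * (c * s) := by
        refine (le_abs_self _).trans ((A.le_opNorm _).trans ?_)
        exact mul_le_mul_of_nonneg_left hz hA0
      rw [h1, map_smul, hAe, smul_eq_mul]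
      nlinarith
    have hκz : κ * ‖z‖ ≤ s/4 := by
      calc κ * ‖z‖ ≤ κ * ((‖e‖ + c) * s) := mul_le_mul_of_nonneg_left hzn hκpos.le
        _ = κ * (‖e‖+c) * s := by ring
        _ ≤ 1/4 * s := mul_le_mul_of_nonneg_right hκe hs.le
        _ = _ := by ring
    rw [hΩ]
    show f (y+z) < 0
    have := hcl y hy
    linarith

/-- Localisation data. -/
lemma geom_partition {n : ℕ} {Ω : Set (VV n)} (hΩo : IsOpen Ω) (hb : Bornology.IsBounded Ω) (f : VV n → ℝ)
    (hf : ContDiff ℝ (⊤ : ℕ∞) f)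
    (hΩ : Ω = f ⁻¹' (Set.Iio 0)) (hfr : ∀ x ∈ frontier Ω, fderiv ℝ f x ≠ 0) :
    ∃ (N : ℕ) (χ : Fin N → VV n → ℝ) (e : Fin N → VV n) (c s0 : Fin N → ℝ),
      (∀ j, Cc (χ j)) ∧ (∀ x ∈ Ω, ∑ j, χ j x = 1) ∧ (∀ j, 0 < c j) ∧ (∀ j, 0 < s0 j) ∧
      ∀ j, ∀ y ∈ closure Ω, y ∈ tsupport (χ j) → ∀ s, 0 < s → s < s0 j →
        ∀ z ∈ Metric.closedBall (s • e j) (c j * s), y + z ∈ Ω := by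
  have hK : IsCompact (closure Ω) := hb.isCompact_closure
  choose! U hUo hxU e c hc s0 hs0 hU using geom_local hΩo f hf hΩ hfr
  have hcov := hK.elim_nhds_subcover (fun x => U x ∩ Metric.ball x 1) (fun x hx =>
    inter_mem ((hUo x hx).mem_nhds (hxU x hx)) (Metric.ball_mem_nhds x one_pos))
  obtain ⟨t, ht, htc⟩ := hcov
  let q : Fin t.card → VV n := fun i => (t.equivFin.symm i : VV n)
  have hq : ∀ i, q i ∈ closure Ω := fun i => ht _ (t.equivFin.symm i).2
  obtain ⟨P, hP⟩ := SmoothPartitionOfUnity.exists_isSubordinate (modelWithCornersSelf ℝ (VV n)) isClosed_closure (s := closure Ω)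
    (fun i : Fin t.card => U (q i) ∩ Metric.ball (q i) 1)
    (fun i => (hUo _ (hq i)).inter Metric.isOpen_ball) (by
      intro x hx
      obtain ⟨y, hy, hxy⟩ := Set.mem_iUnion₂.1 (htc hx)
      refine Set.mem_iUnion.2 ⟨t.equivFin ⟨y, hy⟩, ?_⟩
      simpa [q] using hxy)
  refine ⟨t.card, fun i => P i, fun i => e (q i), fun i => c (q i), fun i => s0 (q i), ?_, ?_,
    fun i => hc _ (hq i), fun i => hs0 _ (hq i), ?_⟩
  · intro i
    refine ⟨(P i).contMDiff.contDiff, ?_⟩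
    refine HasCompactSupport.of_support_subset_isCompact (isCompact_closedBall (q i) 1) ?_
    exact (subset_tsupport _).trans ((hP i).trans (Set.inter_subset_right.trans Metric.ball_subset_closedBall))
  · intro x hx
    have := P.sum_eq_one (subset_closure hx)
    rwa [finsum_eq_sum_of_fintype] at this
  · intro i y hy hyt s hs hs1 z hz
    exact hU _ (hq i) y hy ((hP i) hyt).1 s hs hs1 z hz

lemma FT_shift_rev {n : ℕ} {χ : VV n → ℝ} (h : Cc χ) (ξ x : VV n) :
    𝓕 (fun η => FT χ (ξ - η)) x = (χ x : ℂ) * 𝐞 (-(inner ℝ x ξ)) := by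
  have e1 : (fun η => FT χ (ξ - η)) = (𝓕⁻ (fun x => ((χ x : ℝ) : ℂ))) ∘ (fun η => η + (-ξ)) := by
    ext η
    simp only [Function.comp_apply, Real.fourierInv_eq_fourier_neg]
    unfold FT
    rw [neg_add_rev, neg_neg, ← sub_eq_add_neg]
  have e2 := VectorFourier.fourierIntegral_comp_add_right (V := VV n) (W := VV n) 𝐞 volume (innerₗ (VV n))
    (𝓕⁻ (fun x => ((χ x : ℝ) : ℂ))) (-ξ)
  have hc : Continuous (fun x => ((χ x : ℝ) : ℂ)) := Complex.continuous_ofReal.comp h.1.continuous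
  have e3 := Continuous.fourier_fourierInv_eq hc h.integrable.ofReal h.FT_integrable
  rw [e1]
  have e4 := congrFun e2 x
  refine e4.trans ?_
  have e5 := congrFun e3 x
  change _ • (𝓕 (𝓕⁻ (fun x => ((χ x : ℝ) : ℂ)))) x = _
  rw [e5, Circle.smul_def, smul_eq_mul, mul_comm]
  simp [real_inner_comm]

lemma FT_mul_le {n : ℕ} {χ φ : VV n → ℝ} (h : Cc χ) (hφ : Integrable φ) (ξ : VV n) :
    ‖FT (fun x => χ x * φ x) ξ‖ₑ ≤ ∫⁻ η, ‖FT φ η‖ₑ * ‖FT χ (ξ - η)‖ₑ := by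
  have hG : Integrable (fun η => FT χ (ξ - η)) := h.FT_integrable.comp_sub_left ξ
  have e := selfadj hφ hG
  have e2 : FT (fun x => χ x * φ x) ξ = ∫ x, (φ x : ℂ) * 𝓕 (fun η => FT χ (ξ - η)) x := by
    unfold FT
    rw [Real.fourier_eq]
    congr 1; ext x
    have := FT_shift_rev h ξ x
    unfold FT at this
    rw [this, Circle.smul_def, smul_eq_mul]
    push_cast
    ring
  rw [e2, ← e]
  refine (enorm_integral_le_lintegral_enorm _).trans (le_of_eq ?_)
  simp only [enorm_mul]

/-- Polynomial weight. -/
def Wt {n : ℕ} (m : ℕ) (ξ : VV n) : ℝ := (1 + 2*π*‖ξ‖)^m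

lemma Wt_pos {n : ℕ} (m : ℕ) (ξ : VV n) : 0 < Wt m ξ := by unfold Wt; positivity

lemma Wt_continuous {n : ℕ} (m : ℕ) : Continuous (Wt m : VV n → ℝ) := by unfold Wt; fun_prop

lemma Wt_mul {n : ℕ} (m : ℕ) (ξ η : VV n) : Wt m ξ ≤ Wt m η * Wt m (ξ - η) := by
  unfold Wt
  rw [← mul_pow]
  refine pow_le_pow_left₀ (by positivity) ?_ m
  have h1 : ‖ξ‖ ≤ ‖η‖ + ‖ξ - η‖ := by
    calc ‖ξ‖ = ‖η + (ξ - η)‖ := by congr 1; abel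
      _ ≤ _ := norm_add_le _ _
  have hp := Real.pi_pos
  have : 2*π*‖ξ‖ ≤ 2*π*(‖η‖ + ‖ξ - η‖) := by gcongr
  have : 0 ≤ (2*π*‖η‖) * (2*π*‖ξ-η‖) := by positivity
  nlinarith

lemma zz_le_Wt {n : ℕ} (m : ℕ) (ξ : VV n) : zz ξ ^ m ≤ Wt m ξ ^ 2 := by
  unfold zz Wt
  rw [← pow_mul, ← pow_mul, mul_comm m 2]
  exact pow_le_pow_left₀ (by positivity) (by linarith) _

lemma one_le_Wt {n : ℕ} (m : ℕ) (ξ : VV n) : 1 ≤ Wt m ξ := by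
  unfold Wt
  exact one_le_pow₀ (by have := Real.pi_pos; have := norm_nonneg ξ; nlinarith [mul_nonneg Real.pi_pos.le this])

lemma add_pow_le_two {a : ℝ} (ha : 0 ≤ a) (k : ℕ) : (1 + a)^k ≤ 2^k * (1 + a^k) := by
  rcases le_total a 1 with h | h
  · calc (1+a)^k ≤ 2^k := pow_le_pow_left₀ (by positivity) (by linarith) k
      _ ≤ _ := by nlinarith [pow_nonneg ha k, pow_pos (two_pos : (0:ℝ) < 2) k]
  · calc (1+a)^k ≤ (2*a)^k := pow_le_pow_left₀ (by positivity) (by linarith) k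
      _ = 2^k * a^k := mul_pow _ _ _
      _ ≤ _ := by nlinarith [pow_pos (two_pos : (0:ℝ) < 2) k]

lemma Wt_le {n : ℕ} (m : ℕ) (ξ : VV n) : Wt m ξ ^ 2 ≤ 2^(2*m) * (1 + zz ξ ^ m) := by
  unfold zz Wt
  rw [← pow_mul, ← pow_mul, mul_comm m 2]
  exact add_pow_le_two (by positivity) _

lemma Cc.Wt_integrable {n : ℕ} {χ : VV n → ℝ} (h : Cc χ) (m : ℕ) : Integrable (fun ξ => Wt m ξ * ‖FT χ ξ‖) := by
  have h1 := (𝓕 h.S).integrable_pow_mul volume m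
  rw [← h.FT_eq] at h1
  have h2 := (h.FT_integrable.norm.add (h1.const_mul ((2*π)^m))).const_mul (2^m)
  refine h2.mono' ?_ (Eventually.of_forall fun ξ => ?_)
  · exact ((Wt_continuous m).mul (FT_continuous h.integrable).norm).aestronglyMeasurable
  · have := (Wt_pos m ξ).le
    rw [Real.norm_of_nonneg (by positivity)]
    have := add_pow_le_two (a := 2*π*‖ξ‖) (by positivity) m
    calc Wt m ξ * ‖FT χ ξ‖ ≤ (2^m * (1 + (2*π*‖ξ‖)^m)) * ‖FT χ ξ‖ := by
          gcongr; exact this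
      _ = _ := by simp only [Pi.add_apply]; rw [mul_pow (2*π)]; ring

lemma young {n : ℕ} (a b F : VV n → ℝ≥0∞) (ha : Measurable a) (hb : Measurable b)
    (hF : ∀ ξ, F ξ ≤ ∫⁻ η, a η * b (ξ - η)) :
    ∫⁻ ξ, F ξ ^ 2 ≤ (∫⁻ ξ, a ξ ^ 2) * (∫⁻ ξ, b ξ) ^ 2 := by
  set I := ∫⁻ ξ, b ξ with hI
  have hbI : ∀ ξ : VV n, ∫⁻ η, b (ξ - η) = I := fun ξ => lintegral_sub_left_eq_self b ξ
  have hbI2 : ∀ η : VV n, ∫⁻ ξ, b (ξ - η) = I := fun ξ => lintegral_sub_right_eq_self b ξ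
  have hpt : ∀ ξ, F ξ ^ 2 ≤ (∫⁻ η, a η ^ 2 * b (ξ - η)) * I := by
    intro ξ
    have hbm : Measurable (fun η => b (ξ - η)) := hb.comp (measurable_const.sub measurable_id)
    have h1 : ∫⁻ η, a η * b (ξ - η) ≤ (∫⁻ η, a η ^ 2 * b (ξ - η)) ^ (1/2 : ℝ) * I ^ (1/2 : ℝ) := by
      have := ENNReal.lintegral_mul_norm_pow_le (μ := (volume : Measure (VV n)))
        (f := fun η => a η ^ 2 * b (ξ - η)) (g := fun η => b (ξ - η)) ((ha.pow_const 2).mul hbm).aemeasurable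
        hbm.aemeasurable (p := 1/2) (q := 1/2) (by norm_num) (by norm_num) (by norm_num)
      rw [hbI] at this
      refine le_trans (le_of_eq ?_) this
      congr 1; ext η
      rw [ENNReal.mul_rpow_of_nonneg _ _ (by norm_num), mul_assoc, ← ENNReal.rpow_add_of_nonneg _ _ (by norm_num) (by norm_num),
        ← ENNReal.rpow_natCast_mul]
      norm_num
    calc F ξ ^ 2 ≤ ((∫⁻ η, a η ^ 2 * b (ξ - η)) ^ (1/2 : ℝ) * I ^ (1/2 : ℝ))^2 :=
          pow_le_pow_left₀ zero_le ((hF ξ).trans h1) 2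
      _ = _ := by
          rw [mul_pow, ← ENNReal.rpow_mul_natCast, ← ENNReal.rpow_mul_natCast]
          norm_num
  have hm2 : Measurable (fun p : VV n × VV n => a p.2 ^ 2 * b (p.1 - p.2)) :=
    ((ha.comp measurable_snd).pow_const 2).mul (hb.comp (measurable_fst.sub measurable_snd))
  calc ∫⁻ ξ, F ξ ^ 2 ≤ ∫⁻ ξ, (∫⁻ η, a η ^ 2 * b (ξ - η)) * I := lintegral_mono hpt
    _ = (∫⁻ ξ, (∫⁻ η, a η ^ 2 * b (ξ - η))) * I := lintegral_mul_const _ hm2.lintegral_prod_right'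
    _ = (∫⁻ η, (∫⁻ ξ, a η ^ 2 * b (ξ - η))) * I := by
        rw [lintegral_lintegral_swap hm2.aemeasurable]
    _ = (∫⁻ η, a η ^ 2 * I) * I := by
        congr 2; ext η
        have hbm : Measurable (fun ξ => b (ξ - η)) := hb.comp (measurable_id.sub measurable_const)
        rw [lintegral_const_mul _ hbm, hbI2]
    _ = _ := by rw [lintegral_mul_const _ (ha.pow_const 2)]; ring

lemma loc_integrable {n : ℕ} (m : ℕ) {χ φ : VV n → ℝ} (h : Cc χ) (hφ : Integrable φ)
    (h1 : Integrable (fun ξ => ‖FT φ ξ‖^2)) (h2 : Integrable (fun ξ => zz ξ ^ m * ‖FT φ ξ‖^2))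
    (hχφ : Integrable (fun x => χ x * φ x)) :
    Integrable (fun ξ => Wt m ξ ^ 2 * ‖FT (fun x => χ x * φ x) ξ‖^2) := by
  have hWm := (Wt_continuous (n := n) m)
  have hy := young (fun η => ENNReal.ofReal (Wt m η) * ‖FT φ η‖ₑ) (fun η => ENNReal.ofReal (Wt m η) * ‖FT χ η‖ₑ)
    (fun ξ => ENNReal.ofReal (Wt m ξ) * ‖FT (fun x => χ x * φ x) ξ‖ₑ)
    (hWm.measurable.ennreal_ofReal.mul (FT_continuous hφ).measurable.enorm)
    (hWm.measurable.ennreal_ofReal.mul (FT_continuous h.integrable).measurable.enorm) (by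
      intro ξ
      calc _ ≤ ENNReal.ofReal (Wt m ξ) * ∫⁻ η, ‖FT φ η‖ₑ * ‖FT χ (ξ - η)‖ₑ := by
            gcongr; exact FT_mul_le h hφ ξ
        _ = ∫⁻ η, ENNReal.ofReal (Wt m ξ) * (‖FT φ η‖ₑ * ‖FT χ (ξ - η)‖ₑ) :=
            (lintegral_const_mul' _ _ ENNReal.ofReal_ne_top).symm
        _ ≤ _ := by
            refine lintegral_mono fun η => ?_
            calc _ ≤ ENNReal.ofReal (Wt m η * Wt m (ξ - η)) * (‖FT φ η‖ₑ * ‖FT χ (ξ - η)‖ₑ) := by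
                  gcongr; exact Wt_mul m ξ η
              _ = _ := by rw [ENNReal.ofReal_mul (Wt_pos m η).le]; ring)
  have conv : ∀ (g : VV n → ℝ) (ξ : VV n), ENNReal.ofReal (Wt m ξ) * ‖FT g ξ‖ₑ = ENNReal.ofReal (Wt m ξ * ‖FT g ξ‖) := by
    intro g ξ
    rw [ENNReal.ofReal_mul (Wt_pos m ξ).le, ofReal_norm]
  have conv2 : ∀ (g : VV n → ℝ) (ξ : VV n), (ENNReal.ofReal (Wt m ξ) * ‖FT g ξ‖ₑ)^2
      = ENNReal.ofReal (Wt m ξ ^ 2 * ‖FT g ξ‖^2) := by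
    intro g ξ
    have := (Wt_pos m ξ).le
    rw [conv, ← ENNReal.ofReal_pow (by positivity), mul_pow]
  simp only [conv2] at hy
  simp only [conv] at hy
  have ia : Integrable (fun ξ => Wt m ξ ^ 2 * ‖FT φ ξ‖^2) := by
    refine ((h1.add h2).const_mul (2^(2*m))).mono' ?_ (Eventually.of_forall fun ξ => ?_)
    · exact ((hWm.pow 2).mul ((FT_continuous hφ).norm.pow 2)).aestronglyMeasurable
    · rw [Real.norm_of_nonneg (by positivity)]
      calc _ ≤ (2^(2*m) * (1 + zz ξ ^ m)) * ‖FT φ ξ‖^2 := by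
            gcongr; exact Wt_le m ξ
        _ = _ := by simp only [Pi.add_apply]; ring
  refine ⟨((hWm.pow 2).mul ((FT_continuous hχφ).norm.pow 2)).aestronglyMeasurable, ?_⟩
  rw [hasFiniteIntegral_iff_ofReal (Eventually.of_forall fun ξ => by simp only [Pi.zero_apply]; positivity)]
  refine hy.trans_lt (ENNReal.mul_lt_top ?_ (ENNReal.pow_lt_top ?_))
  · exact (hasFiniteIntegral_iff_ofReal (Eventually.of_forall fun ξ => by simp only [Pi.zero_apply]; positivity)).1 ia.2
  · exact (hasFiniteIntegral_iff_ofReal (Eventually.of_forall fun ξ => by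
      have := (Wt_pos m ξ).le
      simp only [Pi.zero_apply]; positivity)).1 (h.Wt_integrable m).2

lemma exists_moll {n : ℕ} (e : VV n) (c s : ℝ) (hc : 0 < c) (hs : 0 < s) :
    ∃ ρ : VV n → ℝ, Cc ρ ∧ Function.support ρ ⊆ Metric.closedBall (s • e) (c * s) ∧
      (∀ ξ, ‖FT ρ ξ‖ ≤ 1) ∧ ∀ ξ, ‖FT ρ ξ - 1‖ ≤ s * (2 * π * ‖ξ‖ * (‖e‖ + c)) := by
  have hcs : 0 < c * s := by positivity
  let b : ContDiffBump (s • e) := ⟨c*s/2, c*s, by positivity, by linarith⟩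
  have hsupp : Function.support (b.normed volume) ⊆ Metric.closedBall (s • e) (c * s) := by
    rw [b.support_normed_eq]; exact Metric.ball_subset_closedBall
  have hcc : Cc (b.normed volume) := ⟨b.contDiff_normed, b.hasCompactSupport_normed⟩
  have hInt0 := b.integral_normed (μ := (volume : Measure (VV n)))
  refine ⟨b.normed volume, hcc, hsupp, ?_, ?_⟩
  · intro ξ
    refine (FT_norm_le _ ξ).trans (le_of_eq ?_)
    rw [← hInt0]
    congr 1; ext x
    exact abs_of_nonneg (b.nonneg_normed x)
  · intro ξ
    have hchar : ∀ x : VV n, ‖((𝐞 (-(inner ℝ x ξ)) : Circle) : ℂ) - 1‖ ≤ 2*π*(‖x‖*‖ξ‖) := by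
      intro x
      rw [Real.fourierChar_apply]
      have h1 := Real.norm_exp_I_mul_ofReal_sub_one_le (x := 2*π*(-(inner ℝ x ξ)))
      rw [mul_comm Complex.I] at h1
      refine h1.trans ?_
      rw [norm_mul, norm_neg, Real.norm_of_nonneg (by positivity)]
      gcongr
      exact norm_inner_le_norm x ξ
    have hi : Integrable (fun x : VV n => ((b.normed volume x : ℝ) : ℂ)) := hcc.integrable.ofReal
    have e1 : FT (b.normed volume) ξ - 1 = ∫ x : VV n, (((𝐞 (-(inner ℝ x ξ)) : Circle) : ℂ) - 1) * ((b.normed volume x : ℝ) : ℂ) := by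
      have h1 : (1:ℂ) = ∫ x : VV n, ((b.normed volume x : ℝ) : ℂ) := by
        have h0 := integral_ofReal (μ := (volume : Measure (VV n))) (𝕜 := ℂ) (f := b.normed volume)
        rw [hInt0] at h0
        simpa using h0.symm
      have hi2 : Integrable (fun x : VV n => 𝐞 (-(inner ℝ x ξ)) • ((b.normed volume x : ℝ) : ℂ)) := by
        exact (Real.fourierIntegral_convergent_iff ξ).2 hi
      rw [FT, Real.fourier_eq]
      nth_rewrite 1 [h1]
      rw [← integral_sub hi2 hi]
      congr 1; ext x
      rw [Circle.smul_def, smul_eq_mul]; ring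
    rw [e1]
    refine (norm_integral_le_of_norm_le (g := fun x => (s * (2 * π * ‖ξ‖ * (‖e‖ + c))) * b.normed volume x)
      (hcc.integrable.const_mul _) (Eventually.of_forall fun x => ?_)).trans (le_of_eq ?_)
    · rw [norm_mul, Complex.norm_real, Real.norm_of_nonneg (b.nonneg_normed x)]
      by_cases hx : b.normed volume x = 0
      · simp [hx]
      · refine mul_le_mul_of_nonneg_right ((hchar x).trans ?_) (b.nonneg_normed x)
        have h2 := hsupp hx
        rw [Metric.mem_closedBall, dist_eq_norm] at h2
        have h3 : ‖x‖ ≤ s * (‖e‖ + c) := by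
          calc ‖x‖ = ‖s • e + (x - s • e)‖ := by congr 1; abel
            _ ≤ ‖s • e‖ + ‖x - s • e‖ := norm_add_le _ _
            _ ≤ s * ‖e‖ + c * s := by rw [norm_smul, Real.norm_of_nonneg hs.le]; linarith
            _ = _ := by ring
        calc 2*π*(‖x‖*‖ξ‖) ≤ 2*π*((s * (‖e‖ + c))*‖ξ‖) := by gcongr
          _ = _ := by ring
    · rw [integral_const_mul, hInt0, mul_one]

open scoped Convolution Pointwise in
lemma conv_facts {n : ℕ} {ρ ψ : VV n → ℝ} (hρ : Cc ρ) (hψ : Integrable ψ) (K1 K2 : Set (VV n))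
    (hK1 : IsCompact K1) (hK2 : IsCompact K2) (h1 : Function.support ρ ⊆ K1) (h2 : Function.support ψ ⊆ K2) :
    ∃ T : VV n → ℝ, Cc T ∧ (∀ x ∈ tsupport T, ∃ z ∈ K1, ∃ y ∈ K2, x = y + z) ∧ ∀ ξ, FT T ξ = FT ρ ξ * FT ψ ξ := by
  let T : VV n → ℝ := ρ ⋆[ContinuousLinearMap.mul ℝ ℝ, volume] ψ
  have hK : IsCompact (K1 + K2) := hK1.add hK2
  have hsub : Function.support T ⊆ K1 + K2 :=
    (support_convolution_subset _).trans (Set.add_subset_add h1 h2)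
  refine ⟨T, ⟨?_, ?_⟩, ?_, ?_⟩
  · exact hρ.2.contDiff_convolution_left _ hρ.1 hψ.locallyIntegrable
  · exact HasCompactSupport.of_support_subset_isCompact hK hsub
  · intro x hx
    have := closure_minimal hsub hK.isClosed hx
    obtain ⟨z, hz, y, hy, rfl⟩ := Set.mem_add.1 this
    exact ⟨z, hz, y, hy, add_comm _ _⟩
  · intro ξ
    have := Real.fourier_mul_convolution_eq (R := ℂ) (f₁ := fun x => ((ρ x : ℝ):ℂ)) (f₂ := fun x => ((ψ x : ℝ):ℂ))
      hρ.integrable.ofReal hψ.ofReal ξ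
    unfold FT
    rw [← this]
    refine congrFun (congrArg _ (funext fun x => ?_)) ξ
    simp only [T, convolution, ContinuousLinearMap.mul_apply']
    have h0 := integral_ofReal (μ := (volume : Measure (VV n))) (𝕜 := ℂ) (f := fun t => ρ t * ψ (x - t))
    refine h0.symm.trans (integral_congr_ae (Eventually.of_forall fun t => ?_))
    simp

lemma lambda1_mul_le {m : ℕ} {Ω : Set (VV (2*m))} {u : VV (2*m) → ℝ} (h : IsTestFun m Ω u) :
    lambda1 m Ω * (∫ ξ, ‖FT u ξ‖^2) ≤ ∫ ξ, zz ξ ^ m * ‖FT u ξ‖^2 := by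
  have hs0 : ∀ v, IsTestFun m Ω v → 0 ≤ sobNormSq m Ω v := fun v hv => by
    rw [sob_eq hv]
    exact integral_nonneg fun ξ => mul_nonneg (pow_nonneg (zz_nonneg ξ) _) (by positivity)
  have hl0 : ∀ v, IsTestFun m Ω v → 0 ≤ l2NormSq m Ω v := fun v hv => by
    rw [l2_eq hv]
    exact integral_nonneg fun ξ => by positivity
  rw [← sob_eq h, ← l2_eq h]
  rcases (hl0 u h).eq_or_lt with h0 | h0
  · rw [← h0, mul_zero]; exact hs0 u h
  · rw [← le_div_iff₀ h0]
    refine csInf_le ⟨0, ?_⟩ ⟨u, h, ?_, rfl⟩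
    · rintro r ⟨v, hv, -, rfl⟩
      exact div_nonneg (hs0 v hv) (hl0 v hv)
    · rintro rfl
      simp [l2NormSq] at h0

lemma density_ineq {m : ℕ} {Ω : Set (VV (2*m))} (hΩo : IsOpen Ω) (hb : Bornology.IsBounded Ω)
    (hs : HasSmoothBoundary m Ω) {φ : VV (2*m) → ℝ} (hφ : Integrable φ) (hφ0 : ∀ x ∉ Ω, φ x = 0)
    (h1 : Integrable (fun ξ => ‖FT φ ξ‖^2)) (h2 : Integrable (fun ξ => zz ξ ^ m * ‖FT φ ξ‖^2)) :
    lambda1 m Ω * (∫ ξ, ‖FT φ ξ‖^2) ≤ ∫ ξ, zz ξ ^ m * ‖FT φ ξ‖^2 := by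
  obtain ⟨f, hf, hΩ, hfr⟩ := hs
  obtain ⟨N, χ, e, c, s0, hχ, hsum, hc, hs0, hgeo⟩ := geom_partition hΩo hb f hf hΩ hfr
  -- localised pieces
  let ψ : Fin N → VV (2*m) → ℝ := fun j x => χ j x * φ x
  have hψi : ∀ j, Integrable (ψ j) := by
    intro j
    obtain ⟨C, hC⟩ := (hχ j).2.exists_bound_of_continuous (hχ j).1.continuous
    exact hφ.bdd_mul (hχ j).1.continuous.aestronglyMeasurable (Eventually.of_forall hC)
  have hψW := fun j => loc_integrable m (hχ j) hφ h1 h2 (hψi j)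
  have hψsum : ∀ ξ, ∑ j, FT (ψ j) ξ = FT φ ξ := by
    intro ξ
    rw [← FT_sum Finset.univ hψi ξ]
    congr 1; ext x
    simp only [ψ]
    rw [← Finset.sum_mul]
    by_cases hx : x ∈ Ω
    · rw [hsum x hx, one_mul]
    · rw [hφ0 x hx, mul_zero]
  have hψK : ∀ j, Function.support (ψ j) ⊆ tsupport (χ j) ∩ closure Ω := by
    intro j x hx
    have hx' : χ j x * φ x ≠ 0 := hx
    refine ⟨subset_tsupport _ (left_ne_zero_of_mul hx'), subset_closure ?_⟩
    by_contra hc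
    exact (right_ne_zero_of_mul hx') (hφ0 x hc)
  have hK2 : ∀ j, IsCompact (tsupport (χ j) ∩ closure Ω) := fun j =>
    IsCompact.inter_right (hχ j).2 isClosed_closure
  obtain ⟨σ, hσ, hσ0⟩ : ∃ σ : ℝ, (∀ j, σ < s0 j) ∧ 0 < σ := by
    have h3 : ∀ᶠ σ in 𝓝[>] (0:ℝ), ∀ j, σ < s0 j :=
      eventually_all.2 fun j => mem_nhdsWithin_of_mem_nhds (Iio_mem_nhds (hs0 j))
    exact (h3.and self_mem_nhdsWithin).exists
  let s : ℕ → ℝ := fun i => σ / ((i:ℝ) + 1)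
  have hspos : ∀ i, 0 < s i := fun i => by positivity
  have hsle : ∀ i, s i ≤ σ := fun i => div_le_self hσ0.le (by simp)
  have hslim : Tendsto s atTop (𝓝 0) := by
    have := (tendsto_one_div_add_atTop_nhds_zero_nat (𝕜 := ℝ)).const_mul σ
    simpa [s, div_eq_mul_inv] using this
  choose ρ hρc hρs hρ1 hρl using fun (i : ℕ) (j : Fin N) => exists_moll (e j) (c j) (s i) (hc j) (hspos i)
  choose T hTc hTs hTF using fun (i : ℕ) (j : Fin N) => conv_facts (hρc i j) (hψi j) _ _
    (isCompact_closedBall _ _) (hK2 j) (hρs i j) (hψK j)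
  have htest : ∀ i, IsTestFun m Ω (fun x => ∑ j, T i j x) := by
    intro i
    have hcc := Cc.sum Finset.univ (hTc i)
    refine ⟨hcc.1, hcc.2, ?_⟩
    have hsub : tsupport (fun x => ∑ j, T i j x) ⊆ ⋃ j, tsupport (T i j) := by
      refine closure_minimal ?_ (isClosed_iUnion_of_finite fun j => isClosed_tsupport _)
      intro x hx
      obtain ⟨j, -, hj⟩ := Finset.exists_ne_zero_of_sum_ne_zero hx
      exact Set.mem_iUnion.2 ⟨j, subset_tsupport _ hj⟩
    intro x hx
    obtain ⟨j, hj⟩ := Set.mem_iUnion.1 (hsub hx)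
    obtain ⟨z, hz, y, hy, rfl⟩ := hTs i j x hj
    exact hgeo j y hy.2 hy.1 (s i) (hspos i) ((hsle i).trans_lt (hσ j)) z hz
  have hTF2 : ∀ i ξ, FT (fun x => ∑ j, T i j x) ξ = ∑ j, FT (ρ i j) ξ * FT (ψ j) ξ := by
    intro i ξ
    rw [FT_sum Finset.univ (fun j => (hTc i j).integrable) ξ]
    exact Finset.sum_congr rfl fun j _ => hTF i j ξ
  have hρlim : ∀ j ξ, Tendsto (fun i => FT (ρ i j) ξ) atTop (𝓝 1) := by
    intro j ξ
    rw [tendsto_iff_norm_sub_tendsto_zero]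
    refine squeeze_zero (fun _ => norm_nonneg _) (fun i => hρl i j ξ) ?_
    simpa using hslim.mul_const (2 * π * ‖ξ‖ * (‖e j‖ + c j))
  have hTlim : ∀ ξ, Tendsto (fun i => FT (fun x => ∑ j, T i j x) ξ) atTop (𝓝 (FT φ ξ)) := by
    intro ξ
    simp only [hTF2]
    rw [← hψsum ξ]
    refine tendsto_finsetSum _ fun j _ => ?_
    simpa using (hρlim j ξ).mul_const (FT (ψ j) ξ)
  have dct : ∀ p : VV (2*m) → ℝ, Continuous p → (∀ ξ, 0 ≤ p ξ) → (∀ ξ, p ξ ≤ Wt m ξ ^ 2) →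
      Tendsto (fun i => ∫ ξ, p ξ * ‖FT (fun x => ∑ j, T i j x) ξ‖^2) atTop (𝓝 (∫ ξ, p ξ * ‖FT φ ξ‖^2)) := by
    intro p hp hp0 hpW
    refine tendsto_integral_of_dominated_convergence
      (fun ξ => (N:ℝ) * ∑ j, Wt m ξ ^ 2 * ‖FT (ψ j) ξ‖^2) ?_ ?_ ?_ ?_
    · intro i
      have := FT_continuous (htest i).cc.integrable
      exact (hp.mul (this.norm.pow 2)).aestronglyMeasurable
    · exact (integrable_finsetSum _ fun j _ => hψW j).const_mul _
    · intro i
      refine Eventually.of_forall fun ξ => ?_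
      have hp0' := hp0 ξ
      rw [Real.norm_of_nonneg (by positivity), hTF2]
      have b1 : ‖∑ j, FT (ρ i j) ξ * FT (ψ j) ξ‖ ≤ ∑ j, ‖FT (ψ j) ξ‖ := by
        refine (norm_sum_le _ _).trans (Finset.sum_le_sum fun j _ => ?_)
        rw [norm_mul]
        exact mul_le_of_le_one_left (norm_nonneg _) (hρ1 i j ξ)
      have b2 : (∑ j, ‖FT (ψ j) ξ‖)^2 ≤ (N:ℝ) * ∑ j, ‖FT (ψ j) ξ‖^2 := by
        have := sq_sum_le_card_mul_sum_sq (s := Finset.univ) (f := fun j => ‖FT (ψ j) ξ‖)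
        simpa using this
      calc p ξ * ‖∑ j, FT (ρ i j) ξ * FT (ψ j) ξ‖^2 ≤ Wt m ξ ^ 2 * ((N:ℝ) * ∑ j, ‖FT (ψ j) ξ‖^2) := by
            refine mul_le_mul (hpW ξ) ((pow_le_pow_left₀ (norm_nonneg _) b1 2).trans b2) (by positivity) (by positivity)
        _ = _ := by rw [← Finset.mul_sum]; ring
    · exact Eventually.of_forall fun ξ => ((hTlim ξ).norm.pow 2).const_mul _
  have l1 := dct (fun _ => 1) continuous_const (fun _ => zero_le_one) (fun ξ => one_le_pow₀ (one_le_Wt m ξ))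
  have l2 := dct (fun ξ => zz ξ ^ m) (zz_continuous.pow m) (fun ξ => pow_nonneg (zz_nonneg ξ) m) (zz_le_Wt m)
  simp only [one_mul] at l1
  exact le_of_tendsto_of_tendsto' (l1.const_mul _) l2 fun i => lambda1_mul_le (htest i)

lemma FT_const_mul {n : ℕ} (a : ℝ) (g : VV n → ℝ) (ξ : VV n) : FT (fun x => a * g x) ξ = (a:ℂ) * FT g ξ := by
  unfold FT
  rw [Real.fourier_eq, Real.fourier_eq, ← integral_const_mul]
  congr 1; ext x
  simp only [Circle.smul_def, smul_eq_mul]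
  push_cast; ring

lemma spectral_gap {m : ℕ} (hm : 1 ≤ m) {Ω : Set (VV (2*m))} (hΩo : IsOpen Ω) (hb : Bornology.IsBounded Ω)
    (hs : HasSmoothBoundary m Ω) (γ : ℝ) (hγ0 : 0 ≤ γ) (hγ : γ < lambda1 m Ω) :
    ∃ k : ℕ, ∀ u, IsTestFun m Ω u →
      γ * (∫ ξ, ‖FT u ξ‖^2) ≤ ∫ ξ, min (zz ξ ^ m) (k:ℝ) * ‖FT u ξ‖^2 := by
  by_contra hcon
  push Not at hcon
  choose v hv hvl using hcon
  have hz0 : ∀ k : ℕ, ∀ ξ : VV (2*m), 0 ≤ min (zz ξ ^ m) (k:ℝ) := fun k ξ =>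
    le_min (pow_nonneg (zz_nonneg ξ) _) (by positivity)
  have hI0 : ∀ k, 0 < ∫ ξ, ‖FT (v k) ξ‖^2 := by
    intro k
    have h1 : 0 ≤ ∫ ξ, ‖FT (v k) ξ‖^2 := integral_nonneg fun ξ => by positivity
    refine h1.lt_of_ne fun h0 => ?_
    have h2 := hvl k
    rw [← h0, mul_zero] at h2
    exact absurd h2 (not_lt.2 (integral_nonneg fun ξ => mul_nonneg (hz0 k ξ) (by positivity)))
  set I : ℕ → ℝ := fun k => ∫ ξ, ‖FT (v k) ξ‖^2 with hI
  set a : ℕ → ℝ := fun k => (Real.sqrt (I k))⁻¹ with ha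
  have ha2 : ∀ k, (a k)^2 = (I k)⁻¹ := fun k => by
    simp only [ha]; rw [inv_pow, Real.sq_sqrt (hI0 k).le]
  have hn : ∀ k ξ, ‖FT (fun x => a k * v k x) ξ‖^2 = (I k)⁻¹ * ‖FT (v k) ξ‖^2 := by
    intro k ξ
    rw [FT_const_mul, norm_mul, mul_pow, Complex.norm_real, Real.norm_eq_abs, sq_abs, ha2]
  obtain ⟨φ, hφi, hφ0, h1, h2, h3, h4⟩ := limit_props m hm hΩo.measurableSet hb.measure_lt_top.ne γ
    (fun k x => a k * v k x)
    (fun k => ⟨contDiff_const.mul (hv k).1, (hv k).2.1.mul_left⟩)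
    (fun k x hx => by simp only [(hv k).zero_off hx, mul_zero])
    (fun k => by
      simp only [hn]
      rw [integral_const_mul]
      exact inv_mul_cancel₀ (hI0 k).ne')
    (fun k => by
      simp only [hn]
      have : ∀ ξ : VV (2*m), min (zz ξ ^ m) (k:ℝ) * ((I k)⁻¹ * ‖FT (v k) ξ‖^2)
          = (I k)⁻¹ * (min (zz ξ ^ m) (k:ℝ) * ‖FT (v k) ξ‖^2) := fun ξ => by ring
      simp only [this]
      rw [integral_const_mul, inv_mul_le_iff₀ (hI0 k)]
      exact (hvl k).le.trans (le_of_eq (mul_comm _ _)))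
  have h5 := density_ineq hΩo hb hs hφi hφ0 h1 h2
  nlinarith

lemma main_aux (m : ℕ) (hm : 1 ≤ m) (Ω : Set (VV (2*m)))
    (hΩo : IsOpen Ω) (hΩb : Bornology.IsBounded Ω) (hΩs : HasSmoothBoundary m Ω)
    (α β : ℝ) (hβ : β ≤ betaStar m) (hα0 : 0 ≤ α) (hα : α < lambda1 m Ω) :
    Ssup m Ω α β < ⊤ := by
  obtain ⟨γ, hγ1, hγ2⟩ := exists_between hα
  obtain ⟨k, hk⟩ := spectral_gap hm hΩo hΩb hΩs γ (by linarith) hγ2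
  obtain ⟨B, hB, hgar⟩ := garsia m hm (L := (k:ℝ)) (d := γ - α) (by positivity) (by linarith) Ω
    hΩo.measurableSet hΩb.measure_lt_top.ne
  refine lt_of_le_of_lt (iSup₂_le fun u hu => ?_) hB
  obtain ⟨hut, hun⟩ := hu
  have hcc := hut.cc
  refine le_trans ?_ (hgar u hcc ?_)
  · unfold MTint
    refine lintegral_mono fun x => ENNReal.ofReal_le_ofReal (Real.exp_le_exp.2 ?_)
    exact mul_le_mul_of_nonneg_right hβ (sq_nonneg _)
  · rw [sob_eq hut, l2_eq hut] at hun
    have i1 := hcc.integrable_zz m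
    have i2 := hcc.min_integrable m (k:ℝ) (by positivity)
    have i3 := hcc.FT_sq_integrable
    have e : ∀ ξ, cw m (k:ℝ) (γ - α) ξ * ‖FT u ξ‖^2 = (zz ξ ^ m * ‖FT u ξ‖^2
        - min (zz ξ ^ m) (k:ℝ) * ‖FT u ξ‖^2) + (γ - α) * ‖FT u ξ‖^2 := fun ξ => by
      unfold cw; ring
    simp only [e]
    have i4 : Integrable (fun ξ => zz ξ ^ m * ‖FT u ξ‖^2 - min (zz ξ ^ m) (k:ℝ) * ‖FT u ξ‖^2) := i1.sub i2
    rw [integral_add i4 (i3.const_mul _), integral_sub i1 i2, integral_const_mul]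
    have := hk u hut
    linarith

/-- For `0 ≤ β ≤ β*` and `0 ≤ α < λ₁(Ω)`, the supremum `S_{α,β}` is finite. -/
theorem statement0 (m : ℕ) (hm : 1 ≤ m) (Ω : Set (EuclideanSpace ℝ (Fin (2*m))))
    (hΩo : IsOpen Ω) (hΩb : Bornology.IsBounded Ω) (hΩs : HasSmoothBoundary m Ω)
    (α β : ℝ) (hβ0 : 0 ≤ β) (hβ : β ≤ betaStar m) (hα0 : 0 ≤ α) (hα : α < lambda1 m Ω) :
    Ssup m Ω α β < ⊤ := by
  exact main_aux m hm Ω hΩo hΩb hΩs α β hβ hα0 hα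
end
end

section
/- For every integer N ≥ 1 and all reals R > 0 and C > 0 there exists a constant C' > 0, depending only on N, R and C, with the following property: if u is a real-valued C² function on an open set containing the closed ball of radius R centered at 0 in ℝ^N, and |Δu(x)| ≤ C for all x ∈ B_R(0), u(x) ≤ C for all x ∈ B_R(0), and u(0) ≥ −C, then |u(x)| ≤ C' for all x ∈ B_{R/2}(0). -/
open MeasureTheory Real
noncomputable section

/-- `ω_{2m} = 2^{m+1} π^m / (2m−1)‼`, the volume of the unit sphere `S^{2m} ⊂ ℝ^{2m+1}`. -/
def omega2m (m : ℕ) : ℝ := 2^(m+1) * Real.pi^m / (Nat.doubleFactorial (2*m - 1) : ℝ)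

/-- The standard bubble `η₀(y) = −(m/β*) log(1 + |y|²/4)`. -/
def eta0 (m : ℕ) (y : EuclideanSpace ℝ (Fin (2*m))) : ℝ :=
  -((m : ℝ) / betaStar m) * Real.log (1 + ‖y‖^2 / 4)


/-- The kernel `ρ_s(y) = (s² - |y|²)₊`. -/
def rhoK {n : ℕ} (s : ℝ) (y : EuclideanSpace ℝ (Fin n)) : ℝ := max 0 (s ^ 2 - ‖y‖ ^ 2)

lemma hasDerivAt_posPart_sq (a : ℝ) :
    HasDerivAt (fun x : ℝ => (max 0 x) ^ 2) (2 * max 0 a) a := by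
  rw [hasDerivAt_iff_isLittleO]
  have hb : (fun x : ℝ => (max 0 x) ^ 2 - (max 0 a) ^ 2 - (x - a) • (2 * max 0 a))
      =O[nhds a] fun x => (x - a) ^ 2 := by
    refine Asymptotics.IsBigO.of_bound 1 (Filter.Eventually.of_forall fun x => ?_)
    rw [Real.norm_eq_abs, Real.norm_eq_abs, abs_of_nonneg (sq_nonneg (x - a)), abs_le, smul_eq_mul]
    rcases le_total 0 x with hx | hx <;> rcases le_total 0 a with ha | ha <;>
      simp only [max_eq_left, max_eq_right, hx, ha] <;> constructor <;> nlinarith [sq_nonneg (x - a), sq_nonneg x, sq_nonneg a]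
  refine hb.trans_isLittleO ?_
  have h0 : Filter.Tendsto (fun x : ℝ => x - a) (nhds a) (nhds 0) := by
    have : Continuous (fun x : ℝ => x - a) := by fun_prop
    simpa using this.tendsto a
  have := (Asymptotics.isLittleO_pow_id (𝕜 := ℝ) (n := 2) (by norm_num)).comp_tendsto h0
  simpa [Function.comp_def] using this

lemma rhoK_cont {n : ℕ} (s : ℝ) : Continuous (rhoK s : EuclideanSpace ℝ (Fin n) → ℝ) := by
  unfold rhoK; fun_prop

lemma rhoK_nonneg {n : ℕ} (s : ℝ) (y : EuclideanSpace ℝ (Fin n)) : 0 ≤ rhoK s y := le_max_left _ _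

lemma rhoK_zero {n : ℕ} {s : ℝ} (hs : 0 < s) (y : EuclideanSpace ℝ (Fin n)) (hy : s ≤ ‖y‖) :
    rhoK s y = 0 := by
  unfold rhoK
  apply max_eq_left
  nlinarith

lemma rhoK_supp {n : ℕ} {s : ℝ} (hs : 0 < s) :
    HasCompactSupport (rhoK s : EuclideanSpace ℝ (Fin n) → ℝ) := by
  refine HasCompactSupport.intro (isCompact_closedBall 0 s) fun y hy => ?_
  apply rhoK_zero hs
  simp at hy
  exact hy.le

lemma rhoK_integral_pos {n : ℕ} {s : ℝ} (hs : 0 < s) :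
    0 < ∫ y : EuclideanSpace ℝ (Fin n), rhoK s y := by
  refine (rhoK_cont s).integral_pos_of_hasCompactSupport_nonneg_nonzero (rhoK_supp hs)
    (rhoK_nonneg s) (x := 0) ?_
  unfold rhoK
  simp
  exact hs.ne'

lemma rhoK_sq_fderiv {n : ℕ} (s : ℝ) (y v : EuclideanSpace ℝ (Fin n)) :
    DifferentiableAt ℝ (fun y => (rhoK s y) ^ 2) y ∧
    fderiv ℝ (fun y => (rhoK s y) ^ 2) y v = -4 * (rhoK s y * inner ℝ y v) := by
  have h1 : HasFDerivAt (fun y : EuclideanSpace ℝ (Fin n) => s ^ 2 - ‖y‖ ^ 2)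
      (-(2 • innerSL ℝ y)) y :=
    (hasStrictFDerivAt_norm_sq y).hasFDerivAt.const_sub (s ^ 2)
  have h2 := (hasDerivAt_posPart_sq (s ^ 2 - ‖y‖ ^ 2)).comp_hasFDerivAt y h1
  have h3 : HasFDerivAt (fun y => (rhoK s y) ^ 2) _ y := h2
  refine ⟨h3.differentiableAt, ?_⟩
  rw [h3.fderiv]
  simp [rhoK]
  ring

/-- second derivatives as in `lap` -/
lemma ibp {n : ℕ} {s : ℝ} (hs : 0 < s) (g : EuclideanSpace ℝ (Fin n) → ℝ)
    (hg : ContDiff ℝ 2 g) (x : EuclideanSpace ℝ (Fin n)) (t : ℝ) :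
    ∫ y, fderiv ℝ g (x + t • y) y * rhoK s y
      = t / 4 * ∫ y, lap g (x + t • y) * (rhoK s y) ^ 2 := by
  have hρc := rhoK_cont (n := n) s
  have hρs := rhoK_supp (n := n) hs
  have hρ2s : HasCompactSupport (fun y : EuclideanSpace ℝ (Fin n) => (rhoK s y) ^ 2) :=
    hρs.comp_left (g := fun a : ℝ => a ^ 2) (by norm_num)
  let e : Fin n → EuclideanSpace ℝ (Fin n) := fun i => EuclideanSpace.single i 1
  let p : Fin n → EuclideanSpace ℝ (Fin n) → ℝ := fun i z => fderiv ℝ g z (e i)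
  have hp : ∀ i, ContDiff ℝ 1 (p i) := fun i =>
    (hg.fderiv_right (m := 1) (by norm_num)).clm_apply contDiff_const
  have hpc : ∀ i, Continuous (p i) := fun i => (hp i).continuous
  let q : Fin n → EuclideanSpace ℝ (Fin n) → ℝ := fun i z => fderiv ℝ (p i) z (e i)
  have hqc : ∀ i, Continuous (q i) := fun i =>
    ((hp i).continuous_fderiv (by norm_num)).clm_apply continuous_const
  have hlin : Continuous fun y : EuclideanSpace ℝ (Fin n) => x + t • y := by fun_prop
  have hder : ∀ i y, HasFDerivAt (fun y => p i (x + t • y))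
      ((fderiv ℝ (p i) (x + t • y)).comp (t • ContinuousLinearMap.id ℝ _)) y := by
    intro i y
    have h1 : HasFDerivAt (fun y : EuclideanSpace ℝ (Fin n) => x + t • y)
      (t • ContinuousLinearMap.id ℝ _) y := ((hasFDerivAt_id y).const_smul t).const_add x
    exact (((hp i).differentiable (by norm_num)) (x + t • y)).hasFDerivAt.comp y h1
  have hder' : ∀ i y, fderiv ℝ (fun y => p i (x + t • y)) y (e i) = t * q i (x + t • y) := by
    intro i y
    rw [(hder i y).fderiv]
    simp [q]
  have hexp : ∀ y, fderiv ℝ g (x + t • y) y = ∑ i, y i * p i (x + t • y) := by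
    intro y
    have hy : y = ∑ i, y i • e i := by
      have := (EuclideanSpace.basisFun (Fin n) ℝ).sum_repr y
      simpa [e] using this.symm
    have h := congrArg (fderiv ℝ g (x + t • y)) hy
    rw [map_sum] at h
    rw [h]
    simp [p]
  have hinner : ∀ i (y : EuclideanSpace ℝ (Fin n)), inner ℝ y (e i) = y i := by
    intro i y
    simp [e, EuclideanSpace.inner_single_right]
  have hi1 : ∀ i, Integrable fun y => p i (x + t • y) * fderiv ℝ (fun y => (rhoK s y) ^ 2) y (e i) := by
    intro i
    simp_rw [fun y => (rhoK_sq_fderiv s y (e i)).2, hinner]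
    have : Continuous fun y : EuclideanSpace ℝ (Fin n) =>
      p i (x + t • y) * (-4 * (rhoK s y * y i)) := by
      have := (hpc i).comp hlin
      simp only [Function.comp_def] at this
      fun_prop
    refine this.integrable_of_hasCompactSupport ?_
    refine HasCompactSupport.mul_left ?_
    refine HasCompactSupport.mul_left ?_
    exact hρs.mul_right
  have hi2 : ∀ i, Integrable fun y => q i (x + t • y) * (rhoK s y) ^ 2 := by
    intro i
    refine Continuous.integrable_of_hasCompactSupport ?_ hρ2s.mul_left
    exact ((hqc i).comp hlin).mul (hρc.pow 2)
  have hi3 : ∀ i, Integrable fun y => p i (x + t • y) * (rhoK s y) ^ 2 := by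
    intro i
    refine Continuous.integrable_of_hasCompactSupport ?_ hρ2s.mul_left
    exact ((hpc i).comp hlin).mul (hρc.pow 2)
  have key : ∀ i, ∫ y, p i (x + t • y) * fderiv ℝ (fun y => (rhoK s y) ^ 2) y (e i)
      = - (t * ∫ y, q i (x + t • y) * (rhoK s y) ^ 2) := by
    intro i
    rw [integral_mul_fderiv_eq_neg_fderiv_mul_of_integrable (μ := volume)
      (f := fun y => p i (x + t • y)) (g := fun y => (rhoK s y) ^ 2) (v := e i) ?_ (hi1 i) (hi3 i)
      (fun y _ => (hder i y).differentiableAt) (fun y _ => (rhoK_sq_fderiv s y 0).1)]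
    · simp_rw [hder', mul_assoc]
      rw [integral_const_mul]
    · simp_rw [hder', mul_assoc]
      exact (hi2 i).const_mul t
  calc ∫ y, fderiv ℝ g (x + t • y) y * rhoK s y
      = ∫ y, ∑ i, (-1/4 : ℝ) * (p i (x + t • y) * fderiv ℝ (fun y => (rhoK s y) ^ 2) y (e i)) := by
        congr 1
        ext y
        rw [hexp, Finset.sum_mul]
        refine Finset.sum_congr rfl fun i _ => ?_
        rw [(rhoK_sq_fderiv s y (e i)).2, hinner]
        ring
    _ = ∑ i, (-1/4 : ℝ) * ∫ y, (p i (x + t • y) * fderiv ℝ (fun y => (rhoK s y) ^ 2) y (e i)) := by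
        rw [integral_finsetSum _ fun i _ => (hi1 i).const_mul _]
        simp_rw [integral_const_mul]
    _ = ∑ i, t / 4 * ∫ y, q i (x + t • y) * (rhoK s y) ^ 2 := by
        refine Finset.sum_congr rfl fun i _ => ?_
        rw [key]; ring
    _ = t / 4 * ∫ y, ∑ i, q i (x + t • y) * (rhoK s y) ^ 2 := by
        rw [integral_finsetSum _ fun i _ => hi2 i, Finset.mul_sum]
    _ = _ := by
        simp_rw [← Finset.sum_mul]
        rfl

lemma meanvalue {n : ℕ} {s C : ℝ} (hs : 0 < s) (hC : 0 ≤ C) (g : EuclideanSpace ℝ (Fin n) → ℝ)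
    (hg : ContDiff ℝ 2 g) (x : EuclideanSpace ℝ (Fin n))
    (hgs : HasCompactSupport g)
    (hlap : ∀ z ∈ Metric.ball x s, |lap g z| ≤ C) :
    |(∫ y, g (x + y) * rhoK s y) - g x * ∫ y : EuclideanSpace ℝ (Fin n), rhoK s y|
      ≤ C / 4 * ∫ y : EuclideanSpace ℝ (Fin n), (rhoK s y) ^ 2 := by
  have hρc := rhoK_cont (n := n) s
  have hρs := rhoK_supp (n := n) hs
  have hρ2s : HasCompactSupport (fun y : EuclideanSpace ℝ (Fin n) => (rhoK s y) ^ 2) :=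
    hρs.comp_left (g := fun a : ℝ => a ^ 2) (by norm_num)
  have hDc : Continuous (fderiv ℝ g) := hg.continuous_fderiv (by norm_num)
  obtain ⟨M, hM⟩ := hDc.bounded_above_of_compact_support (hgs.fderiv (𝕜 := ℝ))
  have hder : ∀ t : ℝ, HasDerivAt (fun t : ℝ => ∫ y, g (x + t • y) * rhoK s y)
      (∫ y, fderiv ℝ g (x + t • y) y * rhoK s y) t := by
    intro t
    refine (hasDerivAt_integral_of_dominated_loc_of_deriv_le (μ := volume) (s := Set.univ)
      (F := fun t y => g (x + t • y) * rhoK s y)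
      (F' := fun t y => fderiv ℝ g (x + t • y) y * rhoK s y)
      (bound := fun y => M * ‖y‖ * rhoK s y)
      Filter.univ_mem ?_ ?_ ?_ ?_ ?_ ?_).2
    · refine Filter.Eventually.of_forall fun t => Continuous.aestronglyMeasurable ?_
      have := hg.continuous
      fun_prop
    · refine Continuous.integrable_of_hasCompactSupport ?_ hρs.mul_left
      have := hg.continuous
      fun_prop
    · refine Continuous.aestronglyMeasurable ?_
      exact ((hDc.comp (by fun_prop : Continuous fun y => x + t • y)).clm_apply continuous_id).mul hρc
    · refine Filter.Eventually.of_forall fun y t _ => ?_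
      rw [norm_mul, Real.norm_of_nonneg (rhoK_nonneg s y)]
      refine mul_le_mul_of_nonneg_right ?_ (rhoK_nonneg s y)
      exact (ContinuousLinearMap.le_opNorm _ _).trans
        (mul_le_mul_of_nonneg_right (hM _) (norm_nonneg _))
    · refine Continuous.integrable_of_hasCompactSupport ?_ hρs.mul_left
      fun_prop
    · refine Filter.Eventually.of_forall fun y t _ => ?_
      have h1 : HasDerivAt (fun t : ℝ => x + t • y) y t := by
        simpa using ((hasDerivAt_id t).smul_const y).const_add x
      exact (((hg.differentiable (by norm_num)) (x + t • y)).hasFDerivAt.comp_hasDerivAt t h1).mul_const _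
  have hmain := norm_image_sub_le_of_norm_deriv_le_segment_01' (C := C / 4 * ∫ y : EuclideanSpace ℝ (Fin n), (rhoK s y) ^ 2)
    (fun t _ => (hder t).hasDerivWithinAt) ?_
  · simpa [integral_const_mul] using hmain
  intro t ht
  rw [ibp hs g hg, norm_mul]
  have h1 : ‖∫ y, lap g (x + t • y) * rhoK s y ^ 2‖ ≤
      ∫ y : EuclideanSpace ℝ (Fin n), C * (rhoK s y) ^ 2 := by
    refine norm_integral_le_of_norm_le ?_ (Filter.Eventually.of_forall fun y => ?_)
    · exact ((hρc.pow 2).integrable_of_hasCompactSupport hρ2s).const_mul C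
    · rw [norm_mul, Real.norm_of_nonneg (sq_nonneg (rhoK s y))]
      by_cases hy : s ≤ ‖y‖
      · simp [rhoK_zero hs y hy]
      · refine mul_le_mul_of_nonneg_right (hlap _ ?_) (sq_nonneg _)
        rw [mem_ball_iff_norm]
        simp only [add_sub_cancel_left, norm_smul, Real.norm_of_nonneg ht.1]
        push Not at hy
        nlinarith [norm_nonneg y, ht.1, ht.2]
  rw [integral_const_mul] at h1
  have h2 : ‖t / 4‖ ≤ 1 / 4 := by
    rw [Real.norm_of_nonneg (by linarith [ht.1])]; linarith [ht.2]
  calc _ ≤ 1 / 4 * (C * ∫ y : EuclideanSpace ℝ (Fin n), (rhoK s y) ^ 2) :=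
        mul_le_mul h2 h1 (norm_nonneg _) (by norm_num)
    _ = _ := by ring

lemma lap_congr {n : ℕ} {f g : EuclideanSpace ℝ (Fin n) → ℝ} {x : EuclideanSpace ℝ (Fin n)}
    (h : f =ᶠ[nhds x] g) : lap f x = lap g x := by
  unfold lap
  refine Finset.sum_congr rfl fun i _ => ?_
  have : (fun y => fderiv ℝ f y (EuclideanSpace.single i 1)) =ᶠ[nhds x]
      (fun y => fderiv ℝ g y (EuclideanSpace.single i 1)) := by
    filter_upwards [h.fderiv (𝕜 := ℝ)] with y hy
    rw [hy]
  rw [this.fderiv_eq]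

lemma lap_const_sub {n : ℕ} (c : ℝ) (f : EuclideanSpace ℝ (Fin n) → ℝ)
    (x : EuclideanSpace ℝ (Fin n)) : lap (fun y => c - f y) x = - lap f x := by
  unfold lap
  rw [← Finset.sum_neg_distrib]
  refine Finset.sum_congr rfl fun i _ => ?_
  simp only [fderiv_const_sub, neg_apply]
  rw [fderiv_fun_neg]
  rfl

/-- Harnack-type estimate: if `u` is `C²` on a neighbourhood of the closed ball
`\bar B_R(0) ⊂ ℝ^N` with `|Δu| ≤ C` and `u ≤ C` on `B_R(0)` and `u(0) ≥ −C`, then `|u| ≤ C'`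
on `B_{R/2}(0)`, where `C'` depends only on `N`, `R` and `C`. -/
theorem statement18 (N : ℕ) (hN : 1 ≤ N) (R C : ℝ) (hR : 0 < R) (hC : 0 < C) :
    ∃ C' : ℝ, 0 < C' ∧
      ∀ (U : Set (EuclideanSpace ℝ (Fin N))) (u : EuclideanSpace ℝ (Fin N) → ℝ),
        IsOpen U → Metric.closedBall (0 : EuclideanSpace ℝ (Fin N)) R ⊆ U →
        ContDiffOn ℝ 2 u U →
        (∀ x ∈ Metric.ball (0 : EuclideanSpace ℝ (Fin N)) R, |lap u x| ≤ C) →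
        (∀ x ∈ Metric.ball (0 : EuclideanSpace ℝ (Fin N)) R, u x ≤ C) →
        -C ≤ u 0 →
        ∀ x ∈ Metric.ball (0 : EuclideanSpace ℝ (Fin N)) (R/2), |u x| ≤ C' := by
  have hs : 0 < R / 4 := by positivity
  have hS : 0 < 7 * R / 8 := by positivity
  let I1 : ℝ := ∫ y : EuclideanSpace ℝ (Fin N), rhoK (R / 4) y
  let I2 : ℝ := ∫ y : EuclideanSpace ℝ (Fin N), rhoK (7 * R / 8) y
  let K1 : ℝ := C / 4 * ∫ y : EuclideanSpace ℝ (Fin N), (rhoK (R / 4) y) ^ 2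
  let K2 : ℝ := C / 4 * ∫ y : EuclideanSpace ℝ (Fin N), (rhoK (7 * R / 8) y) ^ 2
  have hI1 : 0 < I1 := rhoK_integral_pos hs
  have hI2 : 0 < I2 := rhoK_integral_pos hS
  have hK1 : 0 ≤ K1 := mul_nonneg (by positivity) (integral_nonneg fun y => sq_nonneg _)
  have hK2 : 0 ≤ K2 := mul_nonneg (by positivity) (integral_nonneg fun y => sq_nonneg _)
  have hD : 0 ≤ (2 * C * I2 + K2 + K1) / I1 := by positivity
  refine ⟨C + (2 * C * I2 + K2 + K1) / I1, by positivity, ?_⟩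
  intro U u hU hRU hu hlap huC hu0 x hx
  let b : ContDiffBump (0 : EuclideanSpace ℝ (Fin N)) :=
    ⟨15 * R / 16, R, by positivity, by linarith⟩
  let g : EuclideanSpace ℝ (Fin N) → ℝ := fun y => b y * (C - u y)
  have hgdiff : ContDiff ℝ 2 g := by
    rw [contDiff_iff_contDiffAt]
    intro y
    by_cases hy : y ∈ U
    · exact b.contDiffAt.mul (contDiffAt_const.sub (hu.contDiffAt (hU.mem_nhds hy)))
    · have hy' : y ∉ tsupport b := by
        rw [b.tsupport_eq]; exact fun h => hy (hRU h)
      have : g =ᶠ[nhds y] fun _ => 0 := by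
        filter_upwards [notMem_tsupport_iff_eventuallyEq.1 hy'] with z hz
        simp [g, hz]
      exact contDiffAt_const.congr_of_eventuallyEq this
  have hgs : HasCompactSupport g := b.hasCompactSupport.mul_right
  have hg0 : ∀ y, 0 ≤ g y := by
    intro y
    by_cases hy : y ∈ Metric.ball (0 : EuclideanSpace ℝ (Fin N)) R
    · exact mul_nonneg b.nonneg (by linarith [huC y hy])
    · have : b y = 0 := by
        apply b.zero_of_le_dist
        simpa [b] using hy
      simp [g, this]
  have hgeq : ∀ y ∈ Metric.ball (0 : EuclideanSpace ℝ (Fin N)) (15 * R / 16),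
      g =ᶠ[nhds y] fun z => C - u z := by
    intro y hy
    filter_upwards [b.eventuallyEq_one_of_mem_ball hy] with z hz
    simp [g, hz]
  have hglap : ∀ y ∈ Metric.ball (0 : EuclideanSpace ℝ (Fin N)) (15 * R / 16),
      |lap g y| ≤ C := by
    intro y hy
    rw [lap_congr (hgeq y hy), lap_const_sub, abs_neg]
    exact hlap y (Metric.ball_subset_ball (by linarith) hy)
  have hxn : ‖x‖ < R / 2 := by simpa using hx
  have m1 := meanvalue hs hC.le g hgdiff x hgs fun z hz => hglap z (by
    rw [mem_ball_iff_norm] at hz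
    rw [mem_ball_zero_iff]
    have := norm_le_norm_add_norm_sub' z x
    linarith)
  have m2 := meanvalue hS hC.le g hgdiff 0 hgs fun z hz => hglap z
    (Metric.ball_subset_ball (by linarith) hz)
  simp only [zero_add] at m2
  have hcmp : ∫ y, g (x + y) * rhoK (R / 4) y ≤ ∫ y, g y * rhoK (7 * R / 8) y := by
    have h1 : ∫ y, g (x + y) * rhoK (R / 4) y = ∫ y, g y * rhoK (R / 4) (y - x) := by
      rw [← integral_add_left_eq_self (fun y => g y * rhoK (R / 4) (y - x)) x]
      simp
    rw [h1]
    have hgc := hgdiff.continuous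
    have hc1 := rhoK_cont (n := N) (R / 4)
    have hc2 := rhoK_cont (n := N) (7 * R / 8)
    refine integral_mono
      (Continuous.integrable_of_hasCompactSupport (by fun_prop) hgs.mul_right)
      (Continuous.integrable_of_hasCompactSupport (by fun_prop) hgs.mul_right) fun y => ?_
    refine mul_le_mul_of_nonneg_left ?_ (hg0 y)
    by_cases hy : R / 4 ≤ ‖y - x‖
    · rw [rhoK_zero hs _ hy]; exact rhoK_nonneg _ _
    · push Not at hy
      have := norm_le_norm_add_norm_sub' y x
      unfold rhoK
      refine max_le (le_max_left _ _) (le_max_of_le_right ?_)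
      nlinarith [norm_nonneg y, sq_nonneg ‖y - x‖, sq_nonneg R]
  have hgx : g x = C - u x := (hgeq x (Metric.ball_subset_ball (by linarith) hx)).eq_of_nhds
  have hgz : g 0 = C - u 0 := (hgeq 0 (Metric.mem_ball_self (by positivity))).eq_of_nhds
  have hux : u x ≤ C := huC x (Metric.ball_subset_ball (by linarith) hx)
  have b1 := (abs_le.1 m1).1
  have b2 := (abs_le.1 m2).2
  change -K1 ≤ _ - g x * I1 at b1
  change _ - g 0 * I2 ≤ K2 at b2
  have b3 : g 0 * I2 ≤ 2 * C * I2 := mul_le_mul_of_nonneg_right (by linarith) hI2.le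
  have b4 : g x ≤ (2 * C * I2 + K2 + K1) / I1 := by
    rw [le_div_iff₀ hI1]; linarith
  rw [abs_le]
  constructor <;> linarith
end
end
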